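/- arXiv:1701.04942 — 4 statements merged into one kernel-verified Lean document; each statement's English description precedes it below -/
import Mathlib

section
/- Let p be an odd prime and n ≥ 1. Suppose A ⊆ 𝔽_p^n does not contain p pairwise distinct elements x₁, …, x_p with x₁ + ⋯ + x_p = 0. Then |A| ≤ (2^p − p − 2) · C_p^n, where C_p = inf_{0<x<1} ((1 − x^p)/(1 − x)) · x^{−(p−1)/3}. -/
/-- The Ellenberg–Gijswijt constant `C_p = inf_{0<x<1} ((1-x^p)/(1-x)) x^{-(p-1)/3}`. -/
noncomputable def EGconst (p : ℕ) : ℝ :=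
  sInf {y : ℝ | ∃ x : ℝ, 0 < x ∧ x < 1 ∧
    y = (1 - x ^ p) / (1 - x) * x ^ (-(((p : ℝ) - 1) / 3))}

/-- A function of the coordinates in `I` that splits as a product along a nontrivial partition. -/
def IsSlice {ι X K : Type*} [DecidableEq ι] [Field K] (I : Finset ι) (F : (ι → X) → K) : Prop :=
  ∃ S : Finset ι, S ⊆ I ∧ S.Nonempty ∧ (I \ S).Nonempty ∧ ∃ f g : (ι → X) → K,
    DependsOn f (S : Set ι) ∧ DependsOn g ((I \ S : Finset ι) : Set ι) ∧ ∀ x, F x = f x * g x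

lemma exists_orthogonal {κ X K : Type*} [Fintype X] [DecidableEq X] [Field K] [DecidableEq K]
    (J : Finset κ) (u : κ → X → K) (C : Finset X) :
    ∃ h : X → K, (∀ j ∈ J, ∑ a, h a * u j a = 0) ∧
      C.card ≤ J.card + (C.filter (fun a => h a ≠ 0)).card := by
  classical
  let P : ℕ → Prop := fun m => ∃ h : X → K, (∀ j ∈ J, ∑ a, h a * u j a = 0) ∧
      (C.filter (fun a => h a ≠ 0)).card = m
  have hne : P 0 := ⟨0, by simp, by simp⟩
  have hbd : ∀ m, P m → m ≤ C.card := by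
    rintro m ⟨h, -, rfl⟩
    exact Finset.card_filter_le _ _
  obtain ⟨h, h1, h2⟩ : P (Nat.findGreatest P C.card) := Nat.findGreatest_spec (hbd _ hne) hne
  have h3 : ∀ m, P m → m ≤ Nat.findGreatest P C.card :=
    fun m hm => Nat.le_findGreatest (hbd m hm) hm
  refine ⟨h, h1, ?_⟩
  by_contra hlt
  push Not at hlt
  set D := C.filter (fun a => h a ≠ 0) with hD
  let ext : (C → K) → X → K := fun g a => if ha : a ∈ C then g ⟨a, ha⟩ else 0
  let φ : (C → K) →ₗ[K] ((J → K) × (D → K)) :=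
    { toFun := fun g => (fun j => ∑ a, ext g a * u j a, fun d => ext g d)
      map_add' := by
        intro g g'
        have : ∀ a, ext (g + g') a = ext g a + ext g' a := by
          intro a; simp only [ext]; split_ifs <;> simp
        ext <;> simp [this, add_mul, Finset.sum_add_distrib]
      map_smul' := by
        intro c g
        have : ∀ a, ext (c • g) a = c * ext g a := by
          intro a; simp only [ext]; split_ifs <;> simp
        ext <;> simp [this, mul_assoc, Finset.mul_sum] }
  have hk : LinearMap.ker φ ≠ ⊥ := by
    apply LinearMap.ker_ne_bot_of_finrank_lt
    simpa using hlt
  obtain ⟨g, hg, hg0⟩ := (Submodule.ne_bot_iff _).1 hk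
  rw [LinearMap.mem_ker] at hg
  have hgJ : ∀ j ∈ J, ∑ a, ext g a * u j a = 0 := fun j hj => congrFun (congrArg Prod.fst hg) ⟨j, hj⟩
  have hgD : ∀ d ∈ D, ext g d = 0 := fun d hd => congrFun (congrArg Prod.snd hg) ⟨d, hd⟩
  obtain ⟨⟨b, hb⟩, hgb⟩ := Function.ne_iff.1 hg0
  have hgb' : ext g b ≠ 0 := by simpa [ext, hb] using hgb
  have hbD : b ∉ D := fun hh => hgb' (hgD b hh)
  have hhb : h b = 0 := by
    by_contra hh
    exact hbD (by simp [hD, hb, hh])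
  have := h3 _ ⟨fun a => h a + ext g a, by
    intro j hj
    simp [add_mul, Finset.sum_add_distrib, h1 j hj, hgJ j hj], rfl⟩
  rw [← h2] at this
  beta_reduce at this
  have hsub : insert b D ⊆ C.filter (fun a => h a + ext g a ≠ 0) := by
    intro a ha
    rw [Finset.mem_insert] at ha
    rcases ha with rfl | ha
    · simp [hb, hhb, hgb']
    · have := hgD a ha
      rw [hD, Finset.mem_filter] at ha
      simp [this, ha.1, ha.2]
  have h5 := Finset.card_le_card hsub
  rw [Finset.card_insert_of_notMem hbD] at h5
  omega

lemma IsSlice.cases {ι X K : Type*} [DecidableEq ι] [Fintype X] [Nonempty X] [Field K]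
    {I : Finset ι} {F : (ι → X) → K} (hF : IsSlice I F) {i₀ : ι} (hi : i₀ ∈ I) :
    (∃ u : X → K, ∃ v : (ι → X) → K, ∀ x a, F (Function.update x i₀ a) = u a * v x) ∨
    (∀ h : X → K, IsSlice (I.erase i₀) (fun x => ∑ a, h a * F (Function.update x i₀ a))) := by
  have key : ∃ S : Finset ι, i₀ ∈ S ∧ S ⊆ I ∧ S.Nonempty ∧ (I \ S).Nonempty ∧
      ∃ f g : (ι → X) → K,
      DependsOn f (S : Set ι) ∧ DependsOn g ((I \ S : Finset ι) : Set ι) ∧ 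
      ∀ x, F x = f x * g x := by
    obtain ⟨S, hS, hS1, hS2, f, g, hf, hg, h⟩ := hF
    by_cases h0 : i₀ ∈ S
    · exact ⟨S, h0, hS, hS1, hS2, f, g, hf, hg, h⟩
    · refine ⟨I \ S, by simp [hi, h0], by simp, hS2, ?_, g, f, hg, ?_, fun x => ?_⟩
      · rwa [Finset.sdiff_sdiff_eq_self hS]
      · rwa [Finset.sdiff_sdiff_eq_self hS]
      · rw [h, mul_comm]
  obtain ⟨S, h0, hS, hS1, hS2, f, g, hf, hg, h⟩ := key
  have hgu : ∀ x a, g (Function.update x i₀ a) = g x := by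
    intro x a
    apply hg
    intro i hi'
    have : i ≠ i₀ := by rintro rfl; simp [h0] at hi'
    simp [this]
  by_cases hSc : S = {i₀}
  · left
    obtain ⟨b⟩ := ‹Nonempty X›
    refine ⟨fun a => f (fun _ => a), g, fun x a => ?_⟩
    rw [h, hgu]
    congr 1
    apply hf
    intro i hi'
    simp [hSc] at hi'
    simp [hi']
  · right
    intro w
    refine ⟨S.erase i₀, Finset.erase_subset_erase _ hS, ?_, ?_,
      fun x => ∑ a, w a * f (Function.update x i₀ a), g, ?_, ?_, ?_⟩
    · rw [Finset.nonempty_iff_ne_empty]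
      intro he
      rw [Finset.erase_eq_empty_iff] at he
      rcases he with he | he
      · simp [he] at h0
      · exact hSc he
    · obtain ⟨i, hi'⟩ := hS2
      refine ⟨i, ?_⟩
      simp at hi' ⊢
      grind
    · intro x y hxy
      refine Finset.sum_congr rfl fun a _ => ?_
      congr 1
      apply hf
      intro i hi'
      by_cases hii : i = i₀
      · subst hii; simp
      · simp only [Function.update_of_ne hii]
        apply hxy
        simpa [hii] using hi'
    · intro x y hxy
      apply hg
      intro i hi'
      apply hxy
      simp at hi' ⊢
      grind
    · intro x
      simp only [h, hgu, Finset.sum_mul, mul_assoc]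

theorem partition_rank {ι κ X K : Type*} [DecidableEq ι] [Fintype X] [DecidableEq X]
    [Field K] : ∀ (k : ℕ) (I : Finset ι), I.card = k + 1 → ∀ (J : Finset κ)
    (F : κ → (ι → X) → K), (∀ j ∈ J, IsSlice I (F j)) → ∀ c : X → K,
    (∀ x, ∑ j ∈ J, F j x = ∑ a, c a * ∏ i ∈ I, if x i = a then 1 else 0) →
    ∀ C : Finset X, (∀ a ∈ C, c a ≠ 0) → C.card ≤ J.card := by
  classical
  intro k
  induction k with
  | zero =>
    intro I hI J F hF c hx C hC
    rw [zero_add, Finset.card_eq_one] at hI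
    obtain ⟨i, rfl⟩ := hI
    have hJ : J = ∅ := by
      rw [Finset.eq_empty_iff_forall_notMem]
      intro j hj
      obtain ⟨S, hS, hS1, hS2, -⟩ := hF j hj
      rcases Finset.subset_singleton_iff.1 hS with rfl | rfl
      · simp at hS1
      · simp at hS2
    subst hJ
    have : C = ∅ := by
      rw [Finset.eq_empty_iff_forall_notMem]
      intro a ha
      have := hx (fun _ => a)
      simp at this
      exact hC a ha this.symm
    simp [this]
  | succ k ih =>
    intro I hI J F hF c hx C hC
    rcases C.eq_empty_or_nonempty with rfl | ⟨a₀, ha₀⟩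
    · simp
    have : Nonempty X := ⟨a₀⟩
    obtain ⟨i₀, hi₀⟩ : I.Nonempty := by rw [← Finset.card_pos]; omega
    let P : κ → Prop := fun j => ∃ u : X → K, ∃ v : (ι → X) → K,
      ∀ x a, F j (Function.update x i₀ a) = u a * v x
    have hu : ∀ j, ∃ u : X → K, P j → ∃ v : (ι → X) → K,
      ∀ x a, F j (Function.update x i₀ a) = u a * v x := by
      intro j
      by_cases hj : P j
      · obtain ⟨u, hu⟩ := hj
        exact ⟨u, fun _ => hu⟩
      · exact ⟨0, fun h => absurd h hj⟩
    choose u hu using hu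
    obtain ⟨h, h1, h2⟩ := exists_orthogonal (J.filter P) u C
    have := ih (I.erase i₀) (by rw [Finset.card_erase_of_mem hi₀]; omega) (J.filter (fun j => ¬ P j))
      (fun j x => ∑ a, h a * F j (Function.update x i₀ a)) (by
        intro j hj
        rw [Finset.mem_filter] at hj
        exact ((hF j hj.1).cases hi₀).resolve_left hj.2 h) (fun a => h a * c a) (by
        intro x
        have e1 : ∑ j ∈ J, ∑ a, h a * F j (Function.update x i₀ a) =
          ∑ a, h a * c a * ∏ i ∈ I.erase i₀, if x i = a then 1 else 0 := by
          rw [Finset.sum_comm]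
          refine Finset.sum_congr rfl fun a _ => ?_
          rw [← Finset.mul_sum, hx, mul_assoc]
          congr 1
          rw [Finset.sum_eq_single a]
          · congr 1
            rw [← Finset.mul_prod_erase _ _ hi₀]
            simp only [Function.update_self, if_true, one_mul]
            refine Finset.prod_congr rfl fun i hi => ?_
            rw [Function.update_of_ne (Finset.ne_of_mem_erase hi)]
          · intro b _ hb
            rw [← Finset.mul_prod_erase _ _ hi₀]
            simp [hb.symm]
          · simp
        rw [← e1, ← Finset.sum_filter_add_sum_filter_not J P, right_eq_add]
        refine Finset.sum_eq_zero fun j hj => ?_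
        obtain ⟨v, hv⟩ := hu j (Finset.mem_filter.1 hj).2
        simp only [hv, ← mul_assoc, ← Finset.sum_mul, h1 j hj, zero_mul])
      (C.filter (fun a => h a ≠ 0)) (by
        intro a ha
        rw [Finset.mem_filter] at ha
        exact mul_ne_zero ha.2 (hC a ha.1))
    have h3 := Finset.card_filter_add_card_filter_not (s := J) P
    omega
open Equiv Equiv.Perm
/-- `σ` has at most two cycles (fixed points counted). -/
def TwoCyc {ι : Type*} (σ : Perm ι) : Prop := ∃ a b, ∀ i, σ.SameCycle a i ∨ σ.SameCycle b i

lemma sum_sign_invariant {ι Y K : Type*} [Fintype ι] [DecidableEq ι] [DecidableEq Y] [CommRing K]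
    (x : ι → Y) (hx : ¬ Function.Injective x) :
    ∑ σ : Perm ι, ((sign σ : ℤ) : K) * (if ∀ i, x (σ i) = x i then 1 else 0) = 0 := by
  rw [Function.Injective] at hx
  push Not at hx
  obtain ⟨a, b, hab, hne⟩ := hx
  have hsw : ∀ i, x (swap a b i) = x i := by
    intro i
    rw [swap_apply_def]
    split_ifs with h1 h2 <;> simp [*]
  refine Finset.sum_involution (fun σ _ => swap a b * σ) ?_ ?_ ?_ ?_
  · intro σ _
    by_cases h : ∀ i, x (σ i) = x i <;> simp [sign_swap hne, hsw, h]
  · intro σ _ _ h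
    have : swap a b = 1 := by simpa using h
    exact hne (by simpa [this] using (swap_apply_left a b))
  · simp
  · intro σ _
    simp [← mul_assoc]

lemma twoCyc_const {p n : ℕ} [Fact p.Prime] (σ : Perm (ZMod p)) (hσ : TwoCyc σ)
    (x : ZMod p → Fin n → ZMod p) (hinv : ∀ i, x (σ i) = x i) (hsum : ∑ i, x i = 0) :
    ∀ i, x i = x 0 := by
  classical
  have hsame : ∀ i j, σ.SameCycle i j → x i = x j := by
    rintro i j h
    obtain ⟨k, rfl⟩ := h.exists_nat_pow_eq
    clear h
    induction k with
    | zero => simp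
    | succ k ih => rw [pow_succ', mul_apply, hinv, ih]
  obtain ⟨a, b, hab⟩ := hσ
  have hxy : x a = x b := by
    by_cases hs : σ.SameCycle a b
    · exact hsame _ _ hs
    let S := Finset.univ.filter (fun i => σ.SameCycle a i)
    have hS : ∑ i ∈ S, x i = S.card • x a := by
      apply Finset.sum_eq_card_nsmul
      intro i hi
      exact (hsame _ _ (by simpa [S] using hi)).symm
    have hS' : ∑ i ∈ Sᶜ, x i = Sᶜ.card • x b := by
      apply Finset.sum_eq_card_nsmul
      intro i hi
      refine (hsame _ _ ((hab i).resolve_left (by simpa [S] using hi))).symm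
    rw [← Finset.sum_add_sum_compl S, hS, hS', Finset.card_compl, ZMod.card] at hsum
    have hSlt : S.card < p := by
      conv_rhs => rw [← ZMod.card p]
      apply Finset.card_lt_univ_of_notMem (x := b)
      simpa [S] using hs
    have hSpos : 0 < S.card := Finset.card_pos.2 ⟨a, by simp [S, SameCycle.refl]⟩
    have hS0 : (S.card : ZMod p) ≠ 0 := by
      rw [Ne, ZMod.natCast_eq_zero_iff]
      exact fun h => absurd (Nat.le_of_dvd hSpos h) (by omega)
    funext c
    have := congrFun hsum c
    simp [Nat.cast_sub hSlt.le] at this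
    have h2 : (S.card : ZMod p) * (x a c - x b c) = 0 := by linear_combination this
    exact sub_eq_zero.1 ((mul_eq_zero.1 h2).resolve_left hS0)
  have h3 : ∀ i, x i = x a := by
    intro i
    rcases hab i with h | h
    · exact (hsame _ _ h).symm
    · rw [hxy]; exact (hsame _ _ h).symm
  intro i
  rw [h3 i, h3 0]

lemma exists_small_cycle {ι : Type*} [Fintype ι] [DecidableEq ι] [Nonempty ι] (σ : Perm ι)
    (hσ : ¬ TwoCyc σ) (w : ι → ℕ) :
    ∃ S : Finset ι, S.Nonempty ∧ S.card + 2 ≤ Fintype.card ι ∧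
      (∀ i ∈ S, ∀ j ∈ S, σ.SameCycle i j) ∧ (∀ i, σ i ∈ S ↔ i ∈ S) ∧
      3 * ∑ i ∈ S, w i ≤ ∑ i, w i := by
  classical
  obtain ⟨a⟩ := ‹Nonempty ι›
  unfold TwoCyc at hσ
  push Not at hσ
  obtain ⟨b, hb, -⟩ := hσ a a
  obtain ⟨c, hca, hcb⟩ := hσ a b
  let S : ι → Finset ι := fun a => Finset.univ.filter (fun i => σ.SameCycle a i)
  have hdis : ∀ i j, ¬ σ.SameCycle i j → Disjoint (S i) (S j) := by
    intro i j hij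
    rw [Finset.disjoint_left]
    intro k hk hk'
    simp [S] at hk hk'
    exact hij (hk.trans hk'.symm)
  have htot : ∑ i ∈ S a, w i + ∑ i ∈ S b, w i + ∑ i ∈ S c, w i ≤ ∑ i, w i := by
    rw [← Finset.sum_union (hdis _ _ hb), ← Finset.sum_union]
    · exact Finset.sum_le_sum_of_subset (Finset.subset_univ _)
    · rw [Finset.disjoint_union_left]
      exact ⟨hdis _ _ hca, hdis _ _ hcb⟩
  have main : ∀ d e f, ¬ σ.SameCycle d e → ¬ σ.SameCycle d f → e ≠ f →
      3 * ∑ i ∈ S d, w i ≤ ∑ i, w i → ∃ S : Finset ι, S.Nonempty ∧ S.card + 2 ≤ Fintype.card ι ∧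
      (∀ i ∈ S, ∀ j ∈ S, σ.SameCycle i j) ∧ (∀ i, σ i ∈ S ↔ i ∈ S) ∧
      3 * ∑ i ∈ S, w i ≤ ∑ i, w i := by
    intro d e f hde hdf hef hw
    refine ⟨S d, ⟨d, by simp [S, SameCycle.refl]⟩, ?_, ?_, ?_, hw⟩
    · have : (S d).card + ({e, f} : Finset ι).card ≤ Fintype.card ι := by
        rw [← Finset.card_union_of_disjoint]
        · exact Finset.card_le_univ _
        · simp [S, hde, hdf]
      rwa [Finset.card_pair hef] at this
    · intro i hi j hj
      simp [S] at hi hj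
      exact hi.symm.trans hj
    · simp [S]
  have hba : ¬ σ.SameCycle b a := fun h => hb h.symm
  have hac : ¬ σ.SameCycle c a := fun h => hca h.symm
  have hbc : ¬ σ.SameCycle c b := fun h => hcb h.symm
  by_cases h1 : 3 * ∑ i ∈ S a, w i ≤ ∑ i, w i
  · exact main a b c hb hca (fun h => hcb (h ▸ SameCycle.refl _ _)) h1
  by_cases h2 : 3 * ∑ i ∈ S b, w i ≤ ∑ i, w i
  · exact main b a c hba hcb (fun h => hca (h ▸ SameCycle.refl _ _)) h2
  · exact main c a b hac hbc (fun h => hb (h ▸ SameCycle.refl _ _)) (by omega)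

lemma sum_sign_twoCyc {p : ℕ} [Fact p.Prime] (hodd : Odd p) [DecidablePred (TwoCyc (ι := ZMod p))] :
    ∑ σ : Perm (ZMod p) with TwoCyc σ, ((sign σ : ℤ) : ZMod p) = -1 := by
  classical
  have hp3 : 3 ≤ p := by
    have := (Fact.out : p.Prime).two_le
    rcases hodd with ⟨k, rfl⟩; omega
  let t : Perm (ZMod p) := Equiv.addRight 1
  have htk : ∀ (k : ℕ) (i : ZMod p), (t ^ k) i = i + k := by
    intro k
    induction k with
    | zero => simp
    | succ k ih => intro i; rw [pow_succ', mul_apply, ih]; simp [t, add_assoc]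
  have htp : t ^ p = 1 := by ext i; simp [htk]
  have signodd : ∀ τ : Perm (ZMod p), τ ^ p = 1 → sign τ = 1 := by
    intro τ h
    have := congrArg sign h
    rw [map_pow, map_one] at this
    rcases Int.units_eq_one_or (sign τ) with h1 | h1
    · exact h1
    · rw [h1, hodd.neg_one_pow] at this
      exact absurd this (by decide)
  -- translations
  have trans_mem : ∀ k : ZMod p, TwoCyc (Equiv.addRight k : Perm (ZMod p)) ↔ k ≠ 0 := by
    intro k
    constructor
    · rintro ⟨a, b, h⟩ rfl
      have h1 : (Equiv.addRight (0 : ZMod p)) = 1 := by ext; simp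
      rw [h1] at h
      simp only [sameCycle_one] at h
      have : (Finset.univ : Finset (ZMod p)) ⊆ {a, b} := by
        intro i _
        rcases h i with rfl | rfl <;> simp
      have := (Finset.card_le_card this).trans Finset.card_le_two
      simp [ZMod.card] at this
      omega
    · intro hk
      refine ⟨0, 0, fun i => Or.inl ?_⟩
      have hkk : ∀ (m : ℕ) (i : ZMod p), ((Equiv.addRight k : Perm (ZMod p)) ^ m) i = i + m * k := by
        intro m
        induction m with
        | zero => simp
        | succ m ih => intro i; rw [pow_succ', mul_apply, ih]; simp; ring
      refine ⟨((i / k).val : ℕ), ?_⟩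
      rw [zpow_natCast, hkk]
      simp [hk]
  have hfix : ∀ σ : Perm (ZMod p), t * σ * t⁻¹ = σ ↔ ∃ k, σ = Equiv.addRight k := by
    intro σ
    constructor
    · intro h
      refine ⟨σ 0, ?_⟩
      have h1 : ∀ i, σ (i + 1) = σ i + 1 := by
        intro i
        have := congrArg (fun τ : Perm (ZMod p) => τ (i + 1)) h
        simp [t] at this
        exact this.symm
      have h2 : ∀ m : ℕ, σ m = m + σ 0 := by
        intro m
        induction m with
        | zero => simp
        | succ m ih => push_cast; rw [h1, ih]; ring
      ext i
      have := h2 i.val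
      simpa using this
    · rintro ⟨k, rfl⟩
      ext i; simp [t]; ring
  have key : ∀ s : ℤˣ, ((Finset.univ.filter (fun σ : Perm (ZMod p) => TwoCyc σ ∧ sign σ = s)).card : ZMod p)
      = ((Finset.univ.filter (fun σ : Perm (ZMod p) => (TwoCyc σ ∧ sign σ = s) ∧
        t * σ * t⁻¹ = σ)).card : ZMod p) := by
    intro s
    have hmem : ∀ σ : Perm (ZMod p), (TwoCyc σ ∧ sign σ = s) →
        (TwoCyc (t * σ * t⁻¹) ∧ sign (t * σ * t⁻¹) = s) := by
      rintro σ ⟨⟨a, b, h⟩, h2⟩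
      refine ⟨⟨t a, t b, fun i => ?_⟩, ?_⟩
      · simpa using h (t⁻¹ i)
      · rw [← h2]; simp [signodd t htp]
    let f : Function.End {σ : Perm (ZMod p) // TwoCyc σ ∧ sign σ = s} :=
      fun σ => ⟨t * σ.1 * t⁻¹, hmem _ σ.2⟩
    have hfk : ∀ (k : ℕ) σ, ((f ^ k) σ).1 = t ^ k * σ.1 * (t ^ k)⁻¹ := by
      intro k
      induction k with
      | zero => intro σ; simp; rfl
      | succ k ih =>
        intro σ
        have : (f ^ (k+1)) σ = f ((f ^ k) σ) := by rw [pow_succ']; rfl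
        rw [this]
        show t * ((f ^ k) σ).1 * t⁻¹ = _
        rw [ih, pow_succ']
        group
    have hf : f ^ p ^ 1 = 1 := by
      funext σ
      apply Subtype.ext
      rw [hfk, pow_one, htp]
      simp
      rfl
    have h := card_fixedPoints_modEq hf
    rw [← ZMod.natCast_eq_natCast_iff] at h
    rw [Fintype.card_subtype] at h
    rw [h]
    congr 1
    refine Finset.card_bij (fun σ _ => σ.1.1) ?_ ?_ ?_ |>.symm.symm |> fun e => (Finset.card_univ).symm.trans e
    · rintro ⟨⟨σ, h⟩, h'⟩ _
      have : t * σ * t⁻¹ = σ := congrArg Subtype.val h'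
      simpa [h] using this
    · intro a _ b _ hab
      exact Subtype.ext (Subtype.ext hab)
    · intro σ h
      rw [Finset.mem_filter] at h
      exact ⟨⟨⟨σ, h.2.1⟩, Subtype.ext h.2.2⟩, Finset.mem_univ _, rfl⟩
  have hsplit : ∑ σ : Perm (ZMod p) with TwoCyc σ, ((sign σ : ℤ) : ZMod p) =
      ((Finset.univ.filter (fun σ : Perm (ZMod p) => TwoCyc σ ∧ sign σ = 1)).card : ZMod p) -
      ((Finset.univ.filter (fun σ : Perm (ZMod p) => TwoCyc σ ∧ sign σ = -1)).card : ZMod p) := by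
    rw [Finset.card_filter, Finset.card_filter, Finset.sum_filter]
    push_cast
    rw [← Finset.sum_sub_distrib]
    refine Finset.sum_congr rfl fun σ _ => ?_
    rcases Int.units_eq_one_or (sign σ) with h1 | h1
    · have : (1 : ℤˣ) ≠ -1 := by decide
      by_cases h : TwoCyc σ <;> simp [h, h1, this]
    · have : (-1 : ℤˣ) ≠ 1 := by decide
      by_cases h : TwoCyc σ <;> simp [h, h1, this]
  have hsgn : ∀ k : ZMod p, sign (Equiv.addRight k : Perm (ZMod p)) = 1 := by
    intro k
    apply signodd
    have hkk : ∀ (m : ℕ) (i : ZMod p), ((Equiv.addRight k : Perm (ZMod p)) ^ m) i = i + m * k := by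
        intro m
        induction m with
        | zero => simp
        | succ m ih => intro i; rw [pow_succ', mul_apply, ih]; simp; ring
    ext i
    rw [hkk]
    simp
  rw [hsplit, key, key]
  have e1 : (Finset.univ.filter (fun σ : Perm (ZMod p) => (TwoCyc σ ∧ sign σ = 1) ∧
        t * σ * t⁻¹ = σ)) = (Finset.univ.erase (0 : ZMod p)).image (fun k => Equiv.addRight k) := by
    ext σ
    simp only [Finset.mem_filter, Finset.mem_univ, true_and, hfix, Finset.mem_image,
      Finset.mem_erase, and_true]
    constructor
    · rintro ⟨⟨h, -⟩, k, rfl⟩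
      exact ⟨k, (trans_mem k).1 h, rfl⟩
    · rintro ⟨k, hk, rfl⟩
      exact ⟨⟨(trans_mem k).2 hk, hsgn k⟩, k, rfl⟩
  have e2 : (Finset.univ.filter (fun σ : Perm (ZMod p) => (TwoCyc σ ∧ sign σ = -1) ∧
        t * σ * t⁻¹ = σ)) = ∅ := by
    rw [Finset.eq_empty_iff_forall_notMem]
    intro σ
    simp only [Finset.mem_filter, Finset.mem_univ, true_and, hfix]
    rintro ⟨⟨-, h⟩, k, rfl⟩
    rw [hsgn] at h
    exact absurd h (by decide)
  rw [e1, e2, Finset.card_image_of_injective, Finset.card_erase_of_mem (Finset.mem_univ _)]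
  · rw [Finset.card_univ, ZMod.card, Nat.cast_sub (by omega)]
    simp
  · intro k l h
    have := congrArg (fun τ : Perm (ZMod p) => τ 0) h
    simpa using this

lemma card_monomials_le (p n : ℕ) (hp : 2 ≤ p) (hn : 1 ≤ n) :
    ((Finset.univ.filter (fun m : Fin n → Fin p => 3 * ∑ c, (m c : ℕ) ≤ n * (p - 1))).card : ℝ) ≤
      EGconst p ^ n := by
  set T := Finset.univ.filter (fun m : Fin n → Fin p => 3 * ∑ c, (m c : ℕ) ≤ n * (p - 1))
  have key : ∀ x : ℝ, 0 < x → x < 1 →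
      (T.card : ℝ) ≤ ((1 - x ^ p) / (1 - x) * x ^ (-(((p : ℝ) - 1) / 3))) ^ n := by
    intro x hx0 hx1
    set r : ℝ := x ^ (-(((p : ℝ) - 1) / 3)) with hr
    have hgeom : (1 - x ^ p) / (1 - x) = ∑ j : Fin p, x ^ (j : ℕ) := by
      rw [Fin.sum_univ_eq_sum_range (fun j => x ^ j), geom_sum_eq hx1.ne,
        ← neg_sub (x ^ p), ← neg_sub x, neg_div_neg_eq]
    have hexp : ((1 - x ^ p) / (1 - x) * r) ^ n = ∑ m : Fin n → Fin p, ∏ c, (x ^ (m c : ℕ) * r) := by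
      rw [hgeom, Finset.sum_mul, ← Fintype.prod_sum (fun (_ : Fin n) (j : Fin p) => x ^ (j : ℕ) * r)]
      simp
    have hr0 : 0 < r := Real.rpow_pos_of_pos hx0 _
    rw [hexp]
    calc (T.card : ℝ) = ∑ m ∈ T, 1 := by simp
      _ ≤ ∑ m ∈ T, ∏ c, (x ^ (m c : ℕ) * r) := by
        refine Finset.sum_le_sum fun m hm => ?_
        rw [Finset.prod_mul_distrib, Finset.prod_pow_eq_pow_sum]
        simp only [Finset.prod_const, Finset.card_univ, Fintype.card_fin]
        rw [hr, ← Real.rpow_natCast, ← Real.rpow_natCast, ← Real.rpow_mul hx0.le,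
          ← Real.rpow_add hx0]
        apply Real.one_le_rpow_of_pos_of_le_one_of_nonpos hx0 hx1.le
        have h1 : 3 * ∑ c, (m c : ℕ) ≤ n * (p - 1) := (Finset.mem_filter.1 hm).2
        have h2 : (3 : ℝ) * ((∑ c, (m c : ℕ) : ℕ) : ℝ) ≤ n * (p - 1) := by
          have := (Nat.cast_le (α := ℝ)).2 h1
          rw [Nat.cast_mul, Nat.cast_mul, Nat.cast_sub (by omega)] at this
          exact_mod_cast this
        linarith
      _ ≤ ∑ m : Fin n → Fin p, ∏ c, (x ^ (m c : ℕ) * r) := by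
        apply Finset.sum_le_sum_of_subset_of_nonneg (Finset.subset_univ _)
        intro m _ _
        positivity
  have hn0 : n ≠ 0 := by omega
  have hle : (T.card : ℝ) ^ ((n : ℝ)⁻¹) ≤ EGconst p := by
    apply le_csInf
    · exact ⟨_, 1 / 2, by norm_num, by norm_num, rfl⟩
    · rintro y ⟨x, hx0, hx1, rfl⟩
      have hy : 0 ≤ (1 - x ^ p) / (1 - x) * x ^ (-(((p : ℝ) - 1) / 3)) := by
        have : x ^ p ≤ 1 := pow_le_one₀ hx0.le hx1.le
        apply mul_nonneg (div_nonneg (by linarith) (by linarith)) (Real.rpow_nonneg hx0.le _)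
      calc (T.card : ℝ) ^ ((n : ℝ)⁻¹) ≤ (((1 - x ^ p) / (1 - x) * x ^ (-(((p : ℝ) - 1) / 3))) ^ n) ^ ((n : ℝ)⁻¹) :=
            Real.rpow_le_rpow (by positivity) (key x hx0 hx1) (by positivity)
        _ = _ := Real.pow_rpow_inv_natCast hy hn0
  calc (T.card : ℝ) = ((T.card : ℝ) ^ ((n : ℝ)⁻¹)) ^ n :=
        (Real.rpow_inv_natCast_pow (by positivity) hn0).symm
    _ ≤ _ := pow_le_pow_left₀ (by positivity) hle n

lemma card_blocks {ι : Type*} [Fintype ι] [DecidableEq ι] (p : ℕ) (hp : Fintype.card ι = p)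
    (hp2 : 2 ≤ p) :
    (Finset.univ.filter (fun S : Finset ι => S.Nonempty ∧ S.card + 2 ≤ p)).card + p + 2 = 2 ^ p := by
  have h := Finset.card_filter_add_card_filter_not (s := (Finset.univ : Finset (Finset ι)))
    (fun S => S.Nonempty ∧ S.card + 2 ≤ p)
  have e : Finset.univ.filter (fun S : Finset ι => ¬ (S.Nonempty ∧ S.card + 2 ≤ p)) =
      ({∅} ∪ Finset.powersetCard (p - 1) Finset.univ) ∪ {Finset.univ} := by
    ext S
    have h1 := Finset.card_le_univ S
    simp only [Finset.mem_filter, Finset.mem_univ, true_and, Finset.mem_union,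
      Finset.mem_singleton, Finset.mem_powersetCard, Finset.subset_univ,
      ← Finset.card_eq_zero, ← Finset.card_pos, ← Finset.card_eq_iff_eq_univ, hp]
    omega
  rw [e, Finset.card_union_of_disjoint, Finset.card_union_of_disjoint, Finset.card_powersetCard,
    Finset.card_univ, hp, Finset.card_univ, Fintype.card_finset, hp,
    ← Nat.choose_symm (by omega : p - 1 ≤ p), (by omega : p - (p - 1) = 1)] at h
  · simp at h
    omega
  · simp
    omega
  · simp only [Finset.disjoint_singleton_right, Finset.mem_union, Finset.mem_singleton,
      Finset.mem_powersetCard, Finset.subset_univ, true_and, Finset.card_univ, hp, not_or]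
    refine ⟨fun h => ?_, by omega⟩
    have := congrArg Finset.card h
    simp [hp] at this; omega

lemma indicator_expansion {ι : Type*} [Fintype ι] [DecidableEq ι] {K : Type*} [CommRing K] (q : ℕ) :
    ∃ (s : Option (Fin q → ι) → K) (e : Option (Fin q → ι) → ι → ℕ), (∀ o, ∑ i, e o i ≤ q) ∧
      ∀ z : ι → K, 1 - (∑ i, z i) ^ q = ∑ o, s o * ∏ i, z i ^ e o i := by
  refine ⟨fun o => o.elim 1 (fun _ => -1),
    fun o i => o.elim 0 (fun t => (Finset.univ.filter (fun j => t j = i)).card), ?_, ?_⟩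
  · rintro (_ | t)
    · simp
    · simp only [Option.elim]
      rw [← Finset.card_eq_sum_card_fiberwise (fun x _ => Finset.mem_coe.2 (Finset.mem_univ (t x)))]
      simp
  · intro z
    rw [Fintype.sum_option]
    simp only [Option.elim, one_mul, neg_mul, pow_zero, Finset.prod_const_one, Finset.sum_neg_distrib]
    rw [sub_eq_add_neg]
    congr 2
    have : (∑ i, z i) ^ q = ∏ _j : Fin q, ∑ i, z i := by simp
    rw [this, Fintype.prod_sum]
    refine Finset.sum_congr rfl fun t _ => ?_
    exact Finset.prod_comp z t |>.trans (Finset.prod_subset (Finset.subset_univ _) (by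
      intro i _ hi
      rw [Finset.card_eq_zero.2, pow_zero]
      rw [Finset.filter_eq_empty_iff]
      intro j _ hj
      exact hi (Finset.mem_image.2 ⟨j, Finset.mem_univ _, hj⟩)))

open Classical in
/-- A representative of a finite set of coordinates. -/
noncomputable def blockRep {ι : Type*} [Inhabited ι] (S : Finset ι) : ι :=
  if h : ∃ i, i ∈ S then h.choose else default

lemma blockRep_mem {ι : Type*} [Inhabited ι] {S : Finset ι} (hS : S.Nonempty) : blockRep S ∈ S := by
  have hS' : ∃ i, i ∈ S := hS
  rw [blockRep, dif_pos hS']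
  exact hS'.choose_spec

open Classical in
/-- The block factor attached to a set `S` of coordinates and an exponent vector `m`. -/
noncomputable def blockFactor {ι X K : Type*} [Field K] [Inhabited ι] {n p : ℕ}
    (v : X → Fin n → K) (S : Finset ι) (m : Fin n → Fin p) (x : ι → X) : K :=
  if ∀ i ∈ S, ∀ k ∈ S, x i = x k then
    ∏ c, (v (x (blockRep S)) c) ^ (m c : ℕ) else 0

lemma blockFactor_dependsOn {ι X K : Type*} [Field K] [Inhabited ι] {n p : ℕ}
    (v : X → Fin n → K) (S : Finset ι) (hS : S.Nonempty) (m : Fin n → Fin p) :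
    DependsOn (blockFactor v S m) (S : Set ι) := by
  classical
  intro x y hxy
  have h1 : (∀ i ∈ S, ∀ k ∈ S, x i = x k) ↔ (∀ i ∈ S, ∀ k ∈ S, y i = y k) := by
    constructor
    · intro h i hi k hk
      rw [← hxy i hi, ← hxy k hk, h i hi k hk]
    · intro h i hi k hk
      rw [hxy i hi, hxy k hk, h i hi k hk]
  simp only [blockFactor, h1]
  rw [hxy _ (blockRep_mem hS)]

lemma term_eq {ι X K : Type*} [Field K] [Inhabited ι] [Fintype ι] [DecidableEq ι] [DecidableEq X]
    {n p : ℕ} (hp : Fintype.card ι = p) (hp1 : 1 ≤ p)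
    (v : X → Fin n → K) (σ : Perm ι) (hσ : ¬ TwoCyc σ) (d : ι → Fin n → ℕ)
    (hd : ∀ c, ∑ i, d i c ≤ p - 1) :
    ∃ (S : Finset ι) (m : Fin n → Fin p) (g : (ι → X) → K), (S.Nonempty ∧ S.card + 2 ≤ p) ∧
      3 * ∑ c, (m c : ℕ) ≤ n * (p - 1) ∧ DependsOn g ((Finset.univ \ S : Finset ι) : Set ι) ∧
      ∀ x : ι → X, (if ∀ i, x (σ i) = x i then 1 else 0) * ∏ c, ∏ i, (v (x i) c) ^ d i c =
        blockFactor v S m x * g x := by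
  classical
  obtain ⟨S, hS, hcard, hsame, hinv, hw⟩ := exists_small_cycle σ hσ (fun i => ∑ c, d i c)
  have hm : ∀ c, ∑ i ∈ S, d i c < p := fun c =>
    lt_of_le_of_lt ((Finset.sum_le_sum_of_subset (Finset.subset_univ S)).trans (hd c)) (by omega)
  refine ⟨S, fun c => ⟨∑ i ∈ S, d i c, hm c⟩,
    fun x => if ∀ i, i ∉ S → x (σ i) = x i then
      ∏ c, ∏ i ∈ Finset.univ \ S, (v (x i) c) ^ d i c else 0, ⟨hS, hp ▸ hcard⟩, ?_, ?_, ?_⟩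
  · simp only
    rw [Finset.sum_comm]
    refine hw.trans ?_
    rw [Finset.sum_comm]
    exact (Finset.sum_le_sum fun c _ => hd c).trans (by simp)
  · intro x y hxy
    have hxy' : ∀ i, i ∉ S → x i = y i := fun i hi => hxy i (by simp [hi])
    have h1 : (∀ i, i ∉ S → x (σ i) = x i) ↔ (∀ i, i ∉ S → y (σ i) = y i) := by
      constructor
      · intro h i hi
        rw [← hxy' i hi, ← hxy' (σ i) (by rwa [hinv]), h i hi]
      · intro h i hi
        rw [hxy' i hi, hxy' (σ i) (by rwa [hinv]), h i hi]
    simp only [h1]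
    split_ifs
    · refine Finset.prod_congr rfl fun c _ => Finset.prod_congr rfl fun i hi => ?_
      rw [hxy' i (by simpa using hi)]
    · rfl
  · intro x
    have h1 : (∀ i, x (σ i) = x i) ↔
        (∀ i ∈ S, ∀ k ∈ S, x i = x k) ∧ (∀ i, i ∉ S → x (σ i) = x i) := by
      constructor
      · intro h
        refine ⟨fun i hi k hk => ?_, fun i _ => h i⟩
        obtain ⟨r, rfl⟩ := (hsame i hi k hk).exists_nat_pow_eq
        clear hk
        induction r with
        | zero => simp
        | succ r ih => rw [pow_succ', mul_apply, h, ih]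
      · rintro ⟨h, h'⟩ i
        by_cases hi : i ∈ S
        · exact h _ ((hinv i).2 hi) _ hi
        · exact h' i hi
    simp only [h1, blockFactor]
    by_cases ha : ∀ i ∈ S, ∀ k ∈ S, x i = x k
    · by_cases hb : ∀ i, i ∉ S → x (σ i) = x i
      · rw [if_pos ⟨ha, hb⟩, if_pos ha, if_pos hb, one_mul, ← Finset.prod_mul_distrib]
        refine Finset.prod_congr rfl fun c _ => ?_
        rw [← Finset.prod_mul_prod_compl S, ← Finset.compl_eq_univ_sdiff]
        congr 1
        rw [← Finset.prod_pow_eq_pow_sum]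
        refine Finset.prod_congr rfl fun i hi => ?_
        rw [ha i hi _ (blockRep_mem hS)]
      · rw [if_neg (fun h => hb h.2), if_neg hb]; simp
    · rw [if_neg (fun h => ha h.1), if_neg ha]; simp

lemma zero_sum_indicator {p n : ℕ} [Fact p.Prime] {ι : Type*} [Fintype ι]
    (y : ι → Fin n → ZMod p) :
    (if ∑ i, y i = 0 then (1 : ZMod p) else 0) = ∏ c, (1 - (∑ i, y i c) ^ (p - 1)) := by
  have hp : p - 1 ≠ 0 := by
    have := (Fact.out : p.Prime).two_le
    omega
  split_ifs with h
  · symm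
    refine Finset.prod_eq_one fun c _ => ?_
    have := congrFun h c
    rw [Finset.sum_apply] at this
    rw [this]
    simp [hp]
  · symm
    obtain ⟨c, hc⟩ := Function.ne_iff.1 h
    rw [Finset.sum_apply] at hc
    apply Finset.prod_eq_zero (Finset.mem_univ c)
    rw [ZMod.pow_card_sub_one_eq_one hc, sub_self]

lemma diagonal_identity {p n : ℕ} [Fact p.Prime] (hodd : Odd p)
    [DecidablePred (TwoCyc (ι := ZMod p))]
    (A : Finset (Fin n → ZMod p))
    (hA : ¬∃ x : ZMod p → (Fin n → ZMod p),
      Function.Injective x ∧ (∀ i, x i ∈ A) ∧ ∑ i, x i = 0) (x : ZMod p → A) :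
    ∑ σ : Perm (ZMod p) with ¬ TwoCyc σ, ((sign σ : ℤ) : ZMod p) *
      ((if ∀ i, x (σ i) = x i then 1 else 0) *
        (if ∑ i, (x i : Fin n → ZMod p) = 0 then (1 : ZMod p) else 0)) =
    ∑ a : A, 1 * ∏ i, if x i = a then 1 else 0 := by
  classical
  have hR : (∑ a : A, 1 * ∏ i, if x i = a then (1 : ZMod p) else 0) =
      if ∀ i, x i = x 0 then 1 else 0 := by
    rw [Finset.sum_eq_single (x 0)]
    · rw [one_mul, Finset.prod_ite_zero]
      simp
    · intro b _ hb
      rw [one_mul]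
      exact Finset.prod_eq_zero (Finset.mem_univ 0) (by simp [hb.symm])
    · simp
  rw [hR]
  have hall : ∑ σ : Perm (ZMod p), ((sign σ : ℤ) : ZMod p) *
      ((if ∀ i, x (σ i) = x i then 1 else 0) *
        (if ∑ i, (x i : Fin n → ZMod p) = 0 then (1 : ZMod p) else 0)) = 0 := by
    simp only [← mul_assoc]
    rw [← Finset.sum_mul]
    by_cases hinj : Function.Injective x
    · rw [if_neg, mul_zero]
      intro h
      exact hA ⟨fun i => x i, Subtype.val_injective.comp hinj, fun i => (x i).2, h⟩
    · rw [sum_sign_invariant x hinj, zero_mul]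
  have htwo : ∑ σ : Perm (ZMod p) with TwoCyc σ, ((sign σ : ℤ) : ZMod p) *
      ((if ∀ i, x (σ i) = x i then 1 else 0) *
        (if ∑ i, (x i : Fin n → ZMod p) = 0 then (1 : ZMod p) else 0)) =
      - if ∀ i, x i = x 0 then 1 else 0 := by
    have : ∀ σ ∈ Finset.univ.filter (fun σ : Perm (ZMod p) => TwoCyc σ),
        ((sign σ : ℤ) : ZMod p) * ((if ∀ i, x (σ i) = x i then 1 else 0) *
        (if ∑ i, (x i : Fin n → ZMod p) = 0 then (1 : ZMod p) else 0)) =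
        ((sign σ : ℤ) : ZMod p) * if ∀ i, x i = x 0 then 1 else 0 := by
      intro σ hσ
      congr 1
      by_cases hc : ∀ i, x i = x 0
      · rw [if_pos hc, if_pos, if_pos, one_mul]
        · simp only [hc]
          funext c
          simp
        · intro i; rw [hc, hc i]
      · rw [if_neg hc]
        by_cases h1 : ∀ i, x (σ i) = x i
        · rw [if_neg (c := ∑ i, _ = _), mul_zero]
          intro h
          apply hc
          intro i
          exact Subtype.ext (twoCyc_const σ (Finset.mem_filter.1 hσ).2 (fun i => (x i).1)
            (fun i => congrArg _ (h1 i)) h i)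
        · rw [if_neg h1, zero_mul]
    rw [Finset.sum_congr rfl this, ← Finset.sum_mul, sum_sign_twoCyc hodd, neg_one_mul]
  rw [← Finset.sum_filter_add_sum_filter_not Finset.univ (fun σ : Perm (ZMod p) => TwoCyc σ),
    htwo] at hall
  linear_combination hall

theorem card_le_blocks {p n : ℕ} [Fact p.Prime] (hodd : Odd p)
    (A : Finset (Fin n → ZMod p))
    (hA : ¬∃ x : ZMod p → (Fin n → ZMod p),
      Function.Injective x ∧ (∀ i, x i ∈ A) ∧ ∑ i, x i = 0) :
    A.card ≤ (Finset.univ.filter (fun S : Finset (ZMod p) => S.Nonempty ∧ S.card + 2 ≤ p)).card *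
      (Finset.univ.filter (fun m : Fin n → Fin p => 3 * ∑ c, (m c : ℕ) ≤ n * (p - 1))).card := by
  classical
  have hp := (Fact.out : p.Prime)
  have hp2 := hp.two_le
  obtain ⟨s, e, he, hse⟩ := indicator_expansion (ι := ZMod p) (K := ZMod p) (p - 1)
  let v : A → Fin n → ZMod p := fun a => a.1
  have hterm := fun (ω : {σ : Perm (ZMod p) // ¬ TwoCyc σ} × (Fin n → Option (Fin (p - 1) → ZMod p))) =>
    term_eq (ZMod.card p) (by omega) v ω.1.1 ω.1.2 (fun i c => e (ω.2 c) i) (fun c => he _)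
  choose S m g hS hm hg hx using hterm
  rw [← Finset.card_product]
  set B := (Finset.univ.filter (fun S : Finset (ZMod p) => S.Nonempty ∧ S.card + 2 ≤ p)) ×ˢ
      (Finset.univ.filter (fun m : Fin n → Fin p => 3 * ∑ c, (m c : ℕ) ≤ n * (p - 1))) with hB
  let coef : ({σ : Perm (ZMod p) // ¬ TwoCyc σ} × (Fin n → Option (Fin (p - 1) → ZMod p))) → ZMod p :=
    fun ω => ((sign ω.1.1 : ℤ) : ZMod p) * ∏ c, s (ω.2 c)
  let G : (Finset (ZMod p) × (Fin n → Fin p)) → (ZMod p → A) → ZMod p :=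
    fun j x => ∑ ω with (S ω, m ω) = j, coef ω * g ω x
  have hmain := partition_rank (p - 1) (Finset.univ : Finset (ZMod p))
    (by rw [Finset.card_univ, ZMod.card]; omega) B
    (fun j x => blockFactor v j.1 j.2 x * G j x) (by
      rintro ⟨T, k⟩ hj
      simp only [hB, Finset.mem_product, Finset.mem_filter, Finset.mem_univ, true_and] at hj
      refine ⟨T, Finset.subset_univ _, hj.1.1, ?_, blockFactor v T k, G (T, k),
        blockFactor_dependsOn v T hj.1.1 k, ?_, fun x => rfl⟩
      · rw [← Finset.card_pos, Finset.card_sdiff_of_subset (Finset.subset_univ _),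
          Finset.card_univ, ZMod.card]
        omega
      · intro x y hxy
        refine Finset.sum_congr rfl fun ω hω => ?_
        congr 1
        apply hg ω
        have : S ω = T := congrArg Prod.fst (Finset.mem_filter.1 hω).2
        rw [this]
        exact hxy) (fun _ : A => (1 : ZMod p)) (by
      intro x
      rw [← diagonal_identity hodd A hA x]
      have h1 : ∀ j ∈ B, blockFactor v j.1 j.2 x * G j x =
          ∑ ω with (S ω, m ω) = j, coef ω * (blockFactor v (S ω) (m ω) x * g ω x) := by
        intro j _
        simp only [G]
        rw [Finset.mul_sum]
        refine Finset.sum_congr rfl fun ω hω => ?_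
        have := (Finset.mem_filter.1 hω).2
        subst this
        ring
      rw [Finset.sum_congr rfl h1, Finset.sum_fiberwise_of_maps_to (s := Finset.univ)
        (g := fun ω => (S ω, m ω)) (fun ω _ => by
          simp only [hB, Finset.mem_product, Finset.mem_filter, Finset.mem_univ, true_and]
          exact ⟨hS ω, hm ω⟩)]
      simp only [← hx, coef]
      rw [Fintype.sum_prod_type, Finset.sum_subtype (Finset.univ.filter
        (fun σ : Perm (ZMod p) => ¬ TwoCyc σ)) (p := fun σ => ¬ TwoCyc σ) (by simp)]
      refine Finset.sum_congr rfl fun σ _ => ?_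
      rw [zero_sum_indicator]
      simp only [hse]
      rw [Fintype.prod_sum, Finset.mul_sum, Finset.mul_sum]
      refine Finset.sum_congr rfl fun o _ => ?_
      rw [Finset.prod_mul_distrib]
      simp only [v]
      ring
      ) Finset.univ (by simp)
  simpa using hmain

theorem stmt_0 (p n : ℕ) (hp : p.Prime) (hodd : Odd p) (hn : 1 ≤ n)
    (A : Finset (Fin n → ZMod p))
    (hA : ¬∃ x : Fin p → (Fin n → ZMod p),
      Function.Injective x ∧ (∀ i, x i ∈ A) ∧ ∑ i, x i = 0) :
    (A.card : ℝ) ≤ (2 ^ p - p - 2) * EGconst p ^ n := by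
  have : Fact p.Prime := ⟨hp⟩
  have h1 := card_le_blocks hodd A (by
    rintro ⟨x, hx, hxA, hs⟩
    let ε : Fin p ≃ ZMod p := Fintype.equivOfCardEq (by simp [ZMod.card])
    exact hA ⟨x ∘ ε, hx.comp ε.injective, fun i => hxA _, by
      rw [← hs]; exact Equiv.sum_comp ε x⟩)
  have h2 := card_monomials_le p n hp.two_le hn
  have h3 := card_blocks (ι := ZMod p) p (ZMod.card p) hp.two_le
  have h4 : ((Finset.univ.filter (fun S : Finset (ZMod p) => S.Nonempty ∧ S.card + 2 ≤ p)).card : ℝ)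
      = 2 ^ p - p - 2 := by
    have := congrArg (Nat.cast (R := ℝ)) h3
    push_cast at this
    linarith
  rw [← h4]
  refine (Nat.cast_le.2 h1).trans ?_
  rw [Nat.cast_mul]
  exact mul_le_mul_of_nonneg_left h2 (by positivity)
end

section
/- Let q be a prime power and n ≥ 1, and assume that the group (ℤ/qℤ)^n satisfies property D. Then 𝔰((ℤ/qℤ)^n) ≤ (q − 1)·4^n + 1; that is, every multiset of elements of (ℤ/qℤ)^n of cardinality (q − 1)·4^n + 1 contains a sub-multiset of cardinality q whose sum is 0. -/
/-- The Erdős–Ginzburg–Ziv constant of an abelian group `G`: the smallest `k` such that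
every multiset of elements of `G` of cardinality `k` contains a sub-multiset of
cardinality `exp(G)` summing to zero. -/
noncomputable def EGZ (G : Type*) [AddCommMonoid G] : ℕ :=
  sInf {k | ∀ S : Multiset G, Multiset.card S = k →
    ∃ T ≤ S, Multiset.card T = AddMonoid.exponent G ∧ T.sum = 0}

/-- Property D: every multiset of cardinality `𝔰(G) - 1` with no zero-sum sub-multiset of
cardinality `exp(G)` has each of its elements appearing with multiplicity exactly
`exp(G) - 1`. -/
def PropertyD (G : Type*) [AddCommMonoid G] [DecidableEq G] : Prop :=
  ∀ S : Multiset G, Multiset.card S = EGZ G - 1 →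
    (¬∃ T ≤ S, Multiset.card T = AddMonoid.exponent G ∧ T.sum = 0) →
    ∀ a ∈ S, S.count a = AddMonoid.exponent G - 1

open Finset in
/-- Linear algebra core: the symmetric slice rank bound. -/
lemma slice_core {A F M : Type*} [Fintype A] [DecidableEq A] [Field F] [Fintype M]
    (g : M → A → F) (k : ℕ)
    (H : ∀ u v h : A → F, (∀ α, ∑ a, u a * g α a = 0) → (∀ α, ∑ a, v a * g α a = 0) →
      (∀ α, ∑ a, h a * g α a = 0) → ∑ a, u a * (v a * h a ^ k) = 0) :
    Fintype.card A ≤ 2 * Fintype.card M := by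
  classical
  let L : (A → F) →ₗ[F] (M → F) :=
    { toFun := fun h α => ∑ a, h a * g α a
      map_add' := by intro x y; ext α; simp [add_mul, Finset.sum_add_distrib]
      map_smul' := by intro c x; ext α; simp [Finset.mul_sum, mul_assoc] }
  let V := LinearMap.ker L
  have hV : ∀ h, h ∈ V ↔ ∀ α, ∑ a, h a * g α a = 0 := by
    intro h
    exact ⟨fun hh α => congrFun (LinearMap.mem_ker.1 hh) α,
      fun hh => LinearMap.mem_ker.2 (funext hh)⟩
  have hdim : Fintype.card A ≤ Module.finrank F V + Fintype.card M := by
    have h1 := L.finrank_range_add_finrank_ker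
    have h2 : Module.finrank F (LinearMap.range L) ≤ Module.finrank F (M → F) :=
      Submodule.finrank_le _
    simp only [Module.finrank_fintype_fun_eq_card] at h1 h2
    change _ + Module.finrank F V = _ at h1
    omega
  -- a vector of maximal support
  obtain ⟨h, hhV, hmax⟩ : ∃ h ∈ V, ∀ h' ∈ V,
      (univ.filter fun a => h' a ≠ 0).card ≤ (univ.filter fun a => h a ≠ 0).card := by
    let P : ℕ → Prop := fun m => ∃ h ∈ V, (univ.filter fun a => h a ≠ 0).card = m
    have hP0 : P 0 := ⟨0, V.zero_mem, by simp⟩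
    obtain ⟨h, hh, hc⟩ := Nat.findGreatest_spec (P := P) (Nat.zero_le (Fintype.card A)) hP0
    refine ⟨h, hh, fun h' hh' => ?_⟩
    rw [hc]
    exact Nat.le_findGreatest (Finset.card_le_univ _) ⟨h', hh', rfl⟩
  have hinj : ∀ v ∈ V, (∀ a, h a ≠ 0 → v a = 0) → v = 0 := by
    intro v hv hz
    by_contra hne
    obtain ⟨b, hb⟩ : ∃ b, v b ≠ 0 := by
      by_contra hcon
      push Not at hcon
      exact hne (funext hcon)
    have hlt : (univ.filter fun a => h a ≠ 0).card
        < (univ.filter fun a => (h + v) a ≠ 0).card := by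
      apply Finset.card_lt_card
      rw [Finset.ssubset_iff_of_subset]
      · refine ⟨b, ?_, ?_⟩
        · have : h b = 0 := by
            by_contra h0
            exact hb (hz b h0)
          simp [this, hb]
        · simp only [mem_filter, mem_univ, true_and]
          intro h0
          exact hb (hz b h0)
      · intro a ha
        simp only [mem_filter, mem_univ, true_and] at ha ⊢
        simpa [hz a ha] using ha
    exact absurd (hmax _ (V.add_mem hhV hv)) (not_le.2 hlt)
  let D : (A → F) →ₗ[F] Module.Dual F (A → F) :=
    LinearMap.mk₂ F (fun v u => ∑ a, u a * (v a * h a ^ k))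
      (by intro x y z; rw [← Finset.sum_add_distrib]; exact sum_congr rfl fun a _ => by
            simp only [Pi.add_apply]; ring)
      (by intro c x z; rw [smul_eq_mul, Finset.mul_sum]; exact sum_congr rfl fun a _ => by
            simp only [Pi.smul_apply, smul_eq_mul]; ring)
      (by intro x y z; rw [← Finset.sum_add_distrib]; exact sum_congr rfl fun a _ => by
            simp only [Pi.add_apply]; ring)
      (by intro c x z; rw [smul_eq_mul, Finset.mul_sum]; exact sum_congr rfl fun a _ => by
            simp only [Pi.smul_apply, smul_eq_mul]; ring)
  have hle : V.map D ≤ V.dualAnnihilator := by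
    rintro _ ⟨v, hv, rfl⟩
    rw [Submodule.mem_dualAnnihilator]
    intro u hu
    exact H u v h ((hV u).1 hu) ((hV v).1 hv) ((hV h).1 hhV)
  have hDinj : Function.Injective (D.domRestrict V) := by
    rw [← LinearMap.ker_eq_bot, LinearMap.ker_eq_bot']
    rintro ⟨v, hv⟩ h0
    have : v = 0 := by
      apply hinj v hv
      intro a ha
      have h1 := congrArg (fun f : Module.Dual F (A → F) => f (Pi.single a 1)) h0
      have h2 : ∑ b, (Pi.single a 1 : A → F) b * (v b * h b ^ k) = 0 := h1
      rw [Finset.sum_eq_single a] at h2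
      · simpa [ha] using h2
      · intro b _ hb
        simp [Pi.single_eq_of_ne hb]
      · simp
    exact Subtype.ext this
  have hrank : Module.finrank F (V.map D) = Module.finrank F V := by
    have := LinearMap.finrank_range_of_inj hDinj
    rwa [LinearMap.range_domRestrict] at this
  have h3 := Submodule.finrank_mono hle
  have h4 := Subspace.finrank_add_finrank_dualAnnihilator_eq V
  simp only [Module.finrank_fintype_fun_eq_card] at h4
  omega

open Polynomial in
lemma choose_period (p r : ℕ) [Fact p.Prime] (N j : ℕ) (hj : j < p ^ r) :
    ((N + p ^ r).choose j : ZMod p) = (N.choose j : ZMod p) := by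
  rw [← coeff_one_add_X_pow, ← coeff_one_add_X_pow, pow_add, add_pow_char_pow (p := p),
    one_pow, mul_add, mul_one, coeff_add, coeff_mul_X_pow', if_neg (by omega), add_zero]

lemma choose_period_mul (p r : ℕ) [Fact p.Prime] (N m j : ℕ) (hj : j < p ^ r) :
    ((N + p ^ r * m).choose j : ZMod p) = (N.choose j : ZMod p) := by
  induction m with
  | zero => simp
  | succ m ih => rw [Nat.mul_succ, ← add_assoc, choose_period _ _ _ _ hj, ih]

lemma choose_indicator (p r : ℕ) [hp : Fact p.Prime] (N : ℕ) :
    ((N + (p ^ r - 1)).choose (p ^ r - 1) : ZMod p) = if p ^ r ∣ N then 1 else 0 := by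
  have hq : 0 < p ^ r := pow_pos hp.out.pos r
  split_ifs with h
  · obtain ⟨m, rfl⟩ := h
    rw [add_comm, choose_period_mul _ _ _ _ _ (by omega)]
    simp
  · have h1 : N % p ^ r ≠ 0 := fun h0 => h (Nat.dvd_of_mod_eq_zero h0)
    have h2 := Nat.mod_lt N hq
    have h3 : N + (p ^ r - 1) = (N % p ^ r - 1) + p ^ r * (N / p ^ r + 1) := by
      have := Nat.mod_add_div N (p ^ r)
      rw [Nat.mul_succ]
      omega
    rw [h3, choose_period_mul _ _ _ _ _ (by omega), Nat.choose_eq_zero_of_lt (by omega)]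
    simp

/-- Vandermonde for several summands, with explicit index set. -/
lemma vandermonde_multi {R : Type*} [CommRing R] {κ : Type*} [Fintype κ] [DecidableEq κ]
    (c : κ → ℕ) (d : ℕ) :
    ((∑ i, c i).choose d : R) =
      ∑ l ∈ Finset.univ.finsuppAntidiag d, ∏ i, ((c i).choose (l i) : R) := by
  have h : ∀ N j : ℕ, PowerSeries.coeff j ((1 + PowerSeries.X : PowerSeries R) ^ N)
      = (N.choose j : R) := by
    intro N j
    have : ((1 + PowerSeries.X : PowerSeries R) ^ N)
        = (((1 + Polynomial.X) ^ N : Polynomial R) : PowerSeries R) := by simp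
    rw [this, Polynomial.coeff_coe, Polynomial.coeff_one_add_X_pow]
  rw [← h, ← Finset.prod_pow_eq_pow_sum, PowerSeries.coeff_prod]
  simp only [h]

open Finset in
lemma card_low (ι : Type*) [Fintype ι] [DecidableEq ι] :
    ((Fintype.piFinset fun _ : ι => range (Fintype.card ι + 1)).filter
      fun α => ∑ k, α k ≤ Fintype.card ι).card ≤ 4 ^ Fintype.card ι := by
  set n := Fintype.card ι with hn
  set M := (Fintype.piFinset fun _ : ι => range (n + 1)).filter fun α => ∑ k, α k ≤ n
  have hgeo : ∑ j ∈ range (n + 1), (1 / 2 : ℚ) ^ j ≤ 2 := by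
    rw [geom_sum_eq (by norm_num)]
    have : (0 : ℚ) ≤ (1 / 2) ^ (n + 1) := by positivity
    rw [show (1 / 2 - 1 : ℚ) = -(1 / 2) by norm_num, div_neg, div_div_eq_mul_div]
    linarith
  have h1 : (M.card : ℚ) * (1 / 2) ^ n ≤ 2 ^ n := by
    calc (M.card : ℚ) * (1 / 2) ^ n = ∑ α ∈ M, (1 / 2 : ℚ) ^ n := by simp
      _ ≤ ∑ α ∈ M, ∏ k, (1 / 2 : ℚ) ^ α k := by
          apply sum_le_sum
          intro α hα
          rw [prod_pow_eq_pow_sum]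
          exact pow_le_pow_of_le_one (by norm_num) (by norm_num) (mem_filter.1 hα).2
      _ ≤ ∑ α ∈ Fintype.piFinset fun _ : ι => range (n + 1), ∏ k, (1 / 2 : ℚ) ^ α k := by
          apply sum_le_sum_of_subset_of_nonneg (filter_subset _ _)
          intros; positivity
      _ = ∏ k : ι, ∑ j ∈ range (n + 1), (1 / 2 : ℚ) ^ j := by
          rw [prod_univ_sum]
      _ ≤ 2 ^ n := by
          rw [prod_const, card_univ]
          gcongr
  have h2 : (M.card : ℚ) ≤ 4 ^ n := by
    have : (M.card : ℚ) = (M.card : ℚ) * (1 / 2) ^ n * 2 ^ n := by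
      rw [mul_assoc, ← mul_pow]; norm_num
    rw [this]
    calc _ ≤ (2 : ℚ) ^ n * 2 ^ n := by gcongr
      _ = 4 ^ n := by rw [← mul_pow]; norm_num
  exact_mod_cast h2

open Finset in
lemma card_bound (p r q : ℕ) [Fact p.Prime] (hqr : q = p ^ r) (hq : 2 ≤ q)
    {A ι : Type*} [Fintype A] [DecidableEq A] [Fintype ι] [DecidableEq ι]
    (φ : A → ι → ZMod q)
    (hφ : ∀ x : Fin q → A, ∑ i, φ (x i) = 0 ↔ ∀ i j, x i = x j) :
    Fintype.card A ≤ 2 * 4 ^ Fintype.card ι := by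
  classical
  haveI : NeZero q := ⟨by omega⟩
  set n := Fintype.card ι with hn
  set M := (Fintype.piFinset fun _ : ι => range (n + 1)).filter fun α => ∑ k, α k ≤ n
    with hM
  let g : (ι → ℕ) → A → ZMod p := fun α a => ∏ k, ((φ a k).val.choose (α k) : ZMod p)
  obtain ⟨k, rfl⟩ : ∃ k, q = k + 2 := ⟨q - 2, by omega⟩
  suffices hs : Fintype.card A ≤ 2 * Fintype.card M by
    have := card_low ι
    rw [Fintype.card_coe] at hs
    exact hs.trans (Nat.mul_le_mul_left 2 this)
  refine slice_core (F := ZMod p) (fun α : M => g α.1) k ?_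
  intro u v h hu hv hh
  let Hf : Fin (k + 2) → A → ZMod p := Fin.cons u (Fin.cons v fun _ => h)
  have hHf : ∀ i, ∀ α ∈ M, ∑ a, Hf i a * g α a = 0 := by
    intro i α hα
    refine Fin.cases ?_ (fun i => Fin.cases ?_ (fun i => ?_) i) i
    · exact hu ⟨α, hα⟩
    · exact hv ⟨α, hα⟩
    · exact hh ⟨α, hα⟩
  -- the indicator function
  let I : (Fin (k + 2) → A) → ZMod p := fun x =>
    ∏ t : ι, (((∑ i, (φ (x i) t).val) + (k + 1)).choose (k + 1) : ZMod p)
  have hI : ∀ x, I x = if ∀ i j, x i = x j then 1 else 0 := by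
    intro x
    have h1 : ∀ t, (((∑ i, (φ (x i) t).val) + (k + 1)).choose (k + 1) : ZMod p)
        = if (∑ i, φ (x i)) t = 0 then 1 else 0 := by
      intro t
      have := choose_indicator p r (∑ i, (φ (x i) t).val)
      rw [← hqr] at this
      rw [show k + 1 = k + 2 - 1 from rfl, this]
      have : (∑ i, φ (x i)) t = ((∑ i, (φ (x i) t).val : ℕ) : ZMod (k + 2)) := by
        simp
      simp only [this, ZMod.natCast_eq_zero_iff]
    have h2 : (∀ i j, x i = x j) ↔ ∀ t, (∑ i, φ (x i)) t = 0 := by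
      rw [← hφ, funext_iff]; rfl
    simp only [I, h1, h2]
    rw [Finset.prod_ite_zero]
    simp
  -- expansion
  let c : (ι → (Option (Fin (k + 2)) →₀ ℕ)) → ZMod p :=
    fun l => ∏ t, ((k + 1).choose (l t none) : ZMod p)
  let Λ : Finset (ι → (Option (Fin (k + 2)) →₀ ℕ)) :=
    Fintype.piFinset fun _ => Finset.univ.finsuppAntidiag (k + 1)
  have hexp : ∀ x, I x = ∑ l ∈ Λ, c l * ∏ i, g (fun t => l t (some i)) (x i) := by
    intro x
    have h1 : ∀ t, (((∑ i, (φ (x i) t).val) + (k + 1)).choose (k + 1) : ZMod p)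
        = ∑ l ∈ (Finset.univ : Finset (Option (Fin (k + 2)))).finsuppAntidiag (k + 1),
          (((k + 1).choose (l none) : ZMod p) *
            ∏ i, ((φ (x i) t).val.choose (l (some i)) : ZMod p)) := by
      intro t
      have := vandermonde_multi (R := ZMod p)
        (fun o : Option (Fin (k + 2)) => o.elim (k + 1) fun i => (φ (x i) t).val) (k + 1)
      simp only [Fintype.sum_option, Fintype.prod_option, Option.elim] at this
      rw [add_comm, this]
    simp only [I, h1]
    rw [Finset.prod_univ_sum]
    apply sum_congr rfl
    intro l _
    rw [prod_mul_distrib]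
    simp only [c, g]
    rw [prod_comm]
  have hlow : ∀ l ∈ Λ, ∃ i, (fun t => l t (some i)) ∈ M := by
    intro l hl
    have hl' : ∀ t, l t none + ∑ i, l t (some i) = k + 1 := by
      intro t
      have := (mem_finsuppAntidiag.1 (Fintype.mem_piFinset.1 hl t)).1
      rwa [Fintype.sum_option] at this
    by_contra hcon
    push Not at hcon
    have hbig : ∀ i, n < ∑ t, l t (some i) := by
      intro i
      by_contra hle
      push Not at hle
      apply hcon i
      rw [hM, mem_filter, Fintype.mem_piFinset]
      refine ⟨fun t => ?_, hle⟩
      have := Finset.single_le_sum (f := fun t => l t (some i)) (fun _ _ => Nat.zero_le _)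
        (mem_univ t)
      simp only [mem_range] at this ⊢
      omega
    have h1 : ∑ i : Fin (k + 2), n ≤ ∑ i : Fin (k + 2), ∑ t, l t (some i) :=
      sum_le_sum fun i _ => (hbig i).le
    have h1' : (∑ i : Fin (k + 2), n) < ∑ i : Fin (k + 2), ∑ t, l t (some i) :=
      sum_lt_sum_of_nonempty univ_nonempty fun i _ => hbig i
    rw [sum_comm] at h1'
    have h2 : ∑ t, ∑ i, l t (some i) ≤ ∑ t : ι, (k + 1) :=
      sum_le_sum fun t _ => by have := hl' t; omega
    simp only [sum_const, card_univ, Fintype.card_fin, smul_eq_mul, ← hn] at h1' h2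
    nlinarith
  have hzero : ∑ x : Fin (k + 2) → A, (∏ i, Hf i (x i)) * I x = 0 := by
    simp only [hexp, mul_sum]
    rw [sum_comm]
    apply sum_eq_zero
    intro l hl
    have : ∀ x : Fin (k + 2) → A, (∏ i, Hf i (x i)) *
        (c l * ∏ i, g (fun t => l t (some i)) (x i))
        = c l * ∏ i, (Hf i (x i) * g (fun t => l t (some i)) (x i)) := by
      intro x
      rw [prod_mul_distrib]; ring
    simp only [this]
    rw [← mul_sum]
    have h3 := Finset.prod_univ_sum (fun _ : Fin (k + 2) => (univ : Finset A))
      (fun i a => Hf i a * g (fun t => l t (some i)) a)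
    rw [Fintype.piFinset_univ] at h3
    rw [← h3]
    obtain ⟨i, hi⟩ := hlow l hl
    rw [prod_eq_zero (mem_univ i) (hHf i _ hi), mul_zero]
  have hdiag : ∑ x : Fin (k + 2) → A, (∏ i, Hf i (x i)) * I x
      = ∑ a, u a * (v a * h a ^ k) := by
    simp only [hI, mul_ite, mul_one, mul_zero]
    rw [← sum_filter]
    symm
    apply sum_bij (fun a _ => fun _ => a)
    · intro a _; simp
    · intro a _ b _ hab; exact congrFun hab 0
    · intro x hx
      exact ⟨x 0, mem_univ _, funext fun i => (mem_filter.1 hx).2 0 i⟩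
    · intro a _
      simp [Fin.prod_univ_succ, Hf]
  rw [← hdiag, hzero]

lemma pow_trick (a b : ℕ) (hb : 1 ≤ b) (h : ∀ m, a ^ m ≤ 2 * b ^ m) : a ≤ b := by
  by_contra hlt
  push Not at hlt
  have h1 : ((b + 1 : ℕ) : ℚ) ^ (2 * b) ≤ 2 * (b : ℚ) ^ (2 * b) := by
    exact_mod_cast (Nat.pow_le_pow_left hlt (2 * b)).trans (h (2 * b))
  have hb' : (0 : ℚ) < b := by exact_mod_cast hb
  have h2 := one_add_mul_le_pow (a := (1 / b : ℚ)) (by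
    have : (0 : ℚ) ≤ 1 / b := by positivity
    linarith) (2 * b)
  have h3 : (1 + 1 / b : ℚ) * b = b + 1 := by field_simp
  have h4 : (1 + ((2 * b : ℕ) : ℚ) * (1 / b)) = 3 := by
    push_cast; field_simp; norm_num
  rw [h4] at h2
  have h5 : (3 : ℚ) * b ^ (2 * b) ≤ (b + 1) ^ (2 * b) := by
    rw [← h3, mul_pow]; gcongr
  have h6 : (0 : ℚ) < b ^ (2 * b) := by positivity
  push_cast at h1
  linarith

open Finset in
lemma card_bound' (p r q : ℕ) [Fact p.Prime] (hqr : q = p ^ r) (hq : 2 ≤ q)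
    {A ι : Type*} [Fintype A] [DecidableEq A] [Fintype ι] [DecidableEq ι]
    (φ : A → ι → ZMod q)
    (hφ : ∀ x : Fin q → A, ∑ i, φ (x i) = 0 ↔ ∀ i j, x i = x j) :
    Fintype.card A ≤ 4 ^ Fintype.card ι := by
  apply pow_trick _ _ (Nat.one_le_pow _ _ (by norm_num))
  intro m
  have := card_bound p r q hqr hq (A := Fin m → A) (ι := Fin m × ι)
    (fun x s => φ (x s.1) s.2) ?_
  · rw [← pow_mul]
    simpa [mul_comm] using this
  · intro x
    have h1 : (∑ i, (fun s : Fin m × ι => φ (x i s.1) s.2)) = 0 ↔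
        ∀ s, ∑ i, φ (x i s) = 0 := by
      simp only [funext_iff, Finset.sum_apply, Pi.zero_apply, Prod.forall]
    rw [h1]
    have h2 : ∀ s, ∑ i, φ (x i s) = 0 ↔ ∀ i j, x i s = x j s :=
      fun s => hφ (fun i => x i s)
    simp only [h2]
    exact ⟨fun h i j => funext fun s => h s i j, fun h s i j => congrFun (h i j) s⟩

lemma exponent_pi_zmod (q n : ℕ) (hn : 1 ≤ n) :
    AddMonoid.exponent (Fin n → ZMod q) = q := by
  apply Nat.dvd_antisymm
  · apply AddMonoid.exponent_dvd_of_forall_nsmul_eq_zero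
    intro g
    ext i
    simp
  · have h := AddMonoid.exponent_nsmul_eq_zero (1 : Fin n → ZMod q)
    have h1 := congrFun h ⟨0, hn⟩
    rw [← ZMod.natCast_eq_zero_iff]
    simpa using h1

theorem stmt_2 (q n : ℕ) (hq : IsPrimePow q) (hn : 1 ≤ n)
    (hD : PropertyD (Fin n → ZMod q)) :
    EGZ (Fin n → ZMod q) ≤ (q - 1) * 4 ^ n + 1 := by
  have hexp := exponent_pi_zmod q n hn
  have hq2 : 2 ≤ q := hq.two_le
  by_cases hs0 : EGZ (Fin n → ZMod q) = 0
  · omega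
  have hnot : EGZ (Fin n → ZMod q) - 1 ∉ {k | ∀ S : Multiset (Fin n → ZMod q),
      Multiset.card S = k →
      ∃ T ≤ S, Multiset.card T = AddMonoid.exponent (Fin n → ZMod q) ∧ T.sum = 0} := by
    apply Nat.notMem_of_lt_sInf
    change _ < EGZ (Fin n → ZMod q)
    omega
  simp only [Set.mem_ofPred_eq, not_forall] at hnot
  obtain ⟨S, hcard, hS⟩ := hnot
  have hcount := hD S hcard hS
  rw [hexp] at hcount hS
  have hSc : Multiset.card S = S.toFinset.card * (q - 1) := by
    rw [← Multiset.toFinset_sum_count_eq, Finset.sum_const_nat]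
    intro a ha
    exact hcount a (Multiset.mem_toFinset.1 ha)
  obtain ⟨p, r, hp, hr, hpr⟩ := (isPrimePow_nat_iff q).1 hq
  haveI : Fact p.Prime := ⟨hp⟩
  have hbound := card_bound' p r q hpr.symm hq2 (A := S.toFinset) (ι := Fin n)
    (fun a => a.1) ?_
  · rw [Fintype.card_coe, Fintype.card_fin] at hbound
    have : S.toFinset.card * (q - 1) ≤ (q - 1) * 4 ^ n := by
      rw [mul_comm]; exact Nat.mul_le_mul_left _ hbound
    omega
  · intro x
    constructor
    · intro hsum
      by_contra hne
      apply hS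
      refine ⟨Finset.univ.val.map fun i => (x i).1, ?_, by simp, hsum⟩
      rw [Multiset.le_iff_count]
      intro a
      by_cases ha : a ∈ S
      · rw [hcount a ha]
        have hle : Multiset.count a (Finset.univ.val.map fun i => (x i).1) ≤ q := by
          refine (Multiset.count_le_card _ _).trans ?_
          simp
        have hneq : Multiset.count a (Finset.univ.val.map fun i => (x i).1) ≠ q := by
          intro heq
          apply hne
          have hall : ∀ b ∈ (Finset.univ.val.map fun i => (x i).1), a = b := by
            apply Multiset.count_eq_card.1
            rw [heq]; simp
          intro i j
          apply Subtype.ext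
          rw [← hall (x i).1 (Multiset.mem_map.2 ⟨i, Finset.mem_univ_val _, rfl⟩),
            ← hall (x j).1 (Multiset.mem_map.2 ⟨j, Finset.mem_univ_val _, rfl⟩)]
        omega
      · rw [Multiset.count_eq_zero_of_notMem]
        · exact Nat.zero_le _
        · intro hmem
          obtain ⟨i, _, hi⟩ := Multiset.mem_map.1 hmem
          exact ha (hi ▸ Multiset.mem_toFinset.1 (x i).2)
    · intro hall
      have : ∀ i, (x i).1 = (x ⟨0, by omega⟩).1 := fun i => by rw [hall i ⟨0, by omega⟩]
      simp only [this]
      ext t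
      simp
end

section
/- Let k = p₁^{r₁} ⋯ p_m^{r_m} be the prime factorization of k ≥ 2, and let n ≥ 1. Suppose that for each 1 ≤ i ≤ m, the group (ℤ/p_i^{r_i}ℤ)^n satisfies property D. Then 𝔰((ℤ/kℤ)^n) ≤ (k − 1)·4^n + k. -/
lemma egz_linalg {F T : Type*} [Field F] [Fintype T] (t : ℕ)
    (V : Submodule F (T → F))
    (hV : ∀ g : Fin (t + 2) → T → F, (∀ i, g i ∈ V) → ∑ a, ∏ i, g i a = 0) :
    2 * Module.finrank F V ≤ Fintype.card T := by
  classical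
  -- choose `h` in `V` with maximal support
  obtain ⟨h, hmax⟩ : ∃ h : V, ∀ v : V,
      (Finset.univ.filter fun a => v.1 a ≠ 0).card ≤
        (Finset.univ.filter fun a => h.1 a ≠ 0).card := by
    have hfin : (Set.range fun v : V => (Finset.univ.filter fun a => v.1 a ≠ 0).card).Finite := by
      refine (Set.finite_Iic (Fintype.card T)).subset ?_
      rintro _ ⟨v, rfl⟩
      exact Finset.card_le_univ _
    obtain ⟨_, ⟨h, rfl⟩, hm⟩ := Set.exists_max_image _ id hfin ⟨_, ⟨0, rfl⟩⟩
    exact ⟨h, fun v => hm _ ⟨v, rfl⟩⟩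
  have hinj : ∀ v : V, (∀ a, h.1 a ≠ 0 → v.1 a = 0) → v = 0 := by
    intro v hv
    by_contra hne
    have hex : ∃ a, v.1 a ≠ 0 := by
      by_contra hcon
      push Not at hcon
      exact hne (Subtype.ext (funext hcon))
    obtain ⟨a, ha⟩ := hex
    have hlt : (Finset.univ.filter fun a => h.1 a ≠ 0).card <
        (Finset.univ.filter fun a => (h + v).1 a ≠ 0).card := by
      apply Finset.card_lt_card
      rw [Finset.ssubset_iff_of_subset]
      · refine ⟨a, ?_, ?_⟩
        · have h0 : h.1 a = 0 := by
            by_contra hc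
            exact ha (hv a hc)
          simp [h0, ha]
        · simp only [Finset.mem_filter, Finset.mem_univ, true_and, not_not]
          by_contra hc
          exact ha (hv a hc)
      · intro b hb
        simp only [Finset.mem_filter, Finset.mem_univ, true_and] at hb ⊢
        simpa [hv b hb] using hb
    exact absurd (hmax (h + v)) (not_le.2 hlt)
  let Ψ : V →ₗ[F] Module.Dual F (T → F) :=
    { toFun := fun v => ∑ a, (h.1 a ^ t * v.1 a) • LinearMap.proj a
      map_add' := by
        intro u v
        ext a
        simp [mul_add, add_smul, Finset.sum_add_distrib]
      map_smul' := by
        intro c v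
        simp only [Finset.smul_sum, RingHom.id_apply, smul_smul]
        refine Finset.sum_congr rfl fun a _ => ?_
        congr 1
        simp
        ring }
  have hΨ : ∀ v u, Ψ v u = ∑ a, h.1 a ^ t * v.1 a * u a := by
    intro v u
    simp [Ψ, LinearMap.sum_apply]
  have hΨinj : Function.Injective Ψ := by
    rw [injective_iff_map_eq_zero]
    intro v hv
    apply hinj
    intro a ha
    have := hΨ v (Pi.single a 1)
    rw [hv] at this
    simp [Pi.single_apply] at this
    rcases this with h1 | h1
    · exact absurd h1.1 ha
    · exact h1
  have hrange : LinearMap.range Ψ ≤ V.dualAnnihilator := by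
    rintro _ ⟨v, rfl⟩
    rw [Submodule.mem_dualAnnihilator]
    intro u hu
    rw [hΨ]
    have := hV (Fin.cons u (Fin.cons v.1 fun _ => h.1)) (by
      intro i
      refine Fin.cases ?_ (fun i => ?_) i
      · simpa using hu
      · refine Fin.cases ?_ (fun i => ?_) i
        · simp
        · simp)
    rw [← this]
    refine Finset.sum_congr rfl fun a _ => ?_
    simp [Fin.prod_univ_succ]
    ring
  have h1 := LinearMap.finrank_range_of_inj hΨinj
  have h2 := Submodule.finrank_mono hrange
  have h3 := Subspace.finrank_add_finrank_dualAnnihilator_eq V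
  rw [Module.finrank_fintype_fun_eq_card] at h3
  omega

/-- the number of low degree monomials -/
lemma egz_count (n q : ℕ) :
    2 * (Finset.univ.filter fun m : Fin n → Fin q => ∑ l, (m l : ℕ) < n).card ≤ 4 ^ n := by
  have hgeom : ∑ j : Fin q, (1 / 2 : ℚ) ^ (j : ℕ) ≤ 2 := by
    rw [Fin.sum_univ_eq_sum_range (fun j => (1 / 2 : ℚ) ^ j), geom_sum_eq (by norm_num)]
    have : (0 : ℚ) ≤ (1 / 2) ^ q := by positivity
    rw [div_le_iff_of_neg (by norm_num)]
    linarith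
  have key : ((Finset.univ.filter fun m : Fin n → Fin q => ∑ l, (m l : ℕ) < n).card : ℚ) * 2 ≤
      ∑ m : Fin n → Fin q, 2 ^ n * ∏ l, (1 / 2 : ℚ) ^ (m l : ℕ) := by
    rw [← nsmul_eq_mul, ← Finset.sum_const]
    refine (Finset.sum_le_sum (f := fun _ => (2 : ℚ))
      (g := fun m : Fin n → Fin q => 2 ^ n * ∏ l, (1 / 2 : ℚ) ^ (m l : ℕ)) ?_).trans
      (Finset.sum_le_sum_of_subset_of_nonneg (Finset.filter_subset _ _) ?_)
    · intro m hm
      have hm' : ∑ l, (m l : ℕ) < n := by simpa using hm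
      rw [Finset.prod_pow_eq_pow_sum]
      obtain ⟨d, hd⟩ := Nat.exists_eq_add_of_lt hm'
      set s := ∑ l, (m l : ℕ)
      have : (2 : ℚ) ^ n * (1 / 2) ^ s = 2 ^ (d + 1) := by
        have e : n = (d + 1) + s := by omega
        calc (2 : ℚ) ^ n * (1 / 2) ^ s = 2 ^ ((d + 1) + s) * (1 / 2) ^ s := by rw [← e]
          _ = 2 ^ (d + 1) * (2 * (1 / 2)) ^ s := by rw [pow_add, mul_pow]; ring
          _ = _ := by norm_num
      rw [this, pow_succ]
      have : (1 : ℚ) ≤ 2 ^ d := one_le_pow₀ (by norm_num)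
      linarith
    · intro m _ _
      positivity
  rw [← Finset.mul_sum, ← Fintype.prod_sum (fun (_ : Fin n) (j : Fin q) => (1 / 2 : ℚ) ^ (j : ℕ))] at key
  simp only [Finset.prod_const, Finset.card_univ, Fintype.card_fin] at key
  have h2 : (∑ j : Fin q, (1 / 2 : ℚ) ^ (j : ℕ)) ^ n ≤ 2 ^ n :=
    pow_le_pow_left₀ (Finset.sum_nonneg fun _ _ => by positivity) hgeom n
  have h3 : (2 : ℚ) ^ n * (∑ j : Fin q, (1 / 2 : ℚ) ^ (j : ℕ)) ^ n ≤ 2 ^ n * 2 ^ n :=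
    mul_le_mul_of_nonneg_left h2 (by positivity)
  have h4 : (2 : ℚ) ^ n * 2 ^ n = 4 ^ n := by rw [← mul_pow]; norm_num
  have h5 := key.trans (h3.trans_eq h4)
  rw [mul_comm]
  exact_mod_cast h5

open Polynomial in
/-- indicator of divisibility by a prime power as a binomial coefficient -/
lemma egz_delta (p r : ℕ) [Fact p.Prime] (N : ℕ) :
    (((1 + X : (ZMod p)[X]) ^ (N + (p ^ r - 1))).coeff (p ^ r - 1)) =
      if p ^ r ∣ N then 1 else 0 := by
  set q := p ^ r with hq
  have hqpos : 0 < q := pow_pos (Fact.out : p.Prime).pos r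
  set m := (N + (q - 1)) / q
  set s := (N + (q - 1)) % q
  have hms : N + (q - 1) = q * m + s := (Nat.div_add_mod _ _).symm
  have hs : s < q := Nat.mod_lt _ hqpos
  have hfrob : (1 + X : (ZMod p)[X]) ^ q = 1 + X ^ q := by
    rw [hq, add_pow_char_pow, one_pow]
  have hdvd : (X : (ZMod p)[X]) ^ q ∣ (1 + X ^ q) ^ m - 1 := by
    have := sub_dvd_pow_sub_pow (1 + X ^ q : (ZMod p)[X]) 1 m
    simpa using this
  obtain ⟨w, hw⟩ := hdvd
  have hw' : (1 + X ^ q : (ZMod p)[X]) ^ m = 1 + X ^ q * w := by rw [← hw]; ring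
  rw [hms, pow_add, pow_mul, hfrob, hw', add_mul, one_mul, coeff_add, mul_assoc,
    coeff_X_pow_mul', if_neg (by omega), add_zero, coeff_one_add_X_pow]
  by_cases hN : q ∣ N
  · have hs' : s = q - 1 := by
      obtain ⟨c, rfl⟩ := hN
      show (q * c + (q - 1)) % q = q - 1
      rw [Nat.mul_add_mod, Nat.mod_eq_of_lt (by omega)]
    rw [if_pos hN, hs']
    simp
  · have hs' : s < q - 1 := by
      by_contra hc
      have : s = q - 1 := by omega
      apply hN
      have : N = q * m := by omega
      exact ⟨m, this⟩
    rw [if_neg hN, Nat.choose_eq_zero_of_lt hs']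
    simp

open Polynomial in
/-- multivariate expansion of the indicator -/
lemma egz_expand (p r : ℕ) [Fact p.Prime] (ι : Type*) [Fintype ι] [DecidableEq ι] :
    ∃ c : (ι → Fin (p ^ r)) → ZMod p,
      (∀ J, c J ≠ 0 → ∑ i, (J i : ℕ) ≤ p ^ r - 1) ∧
      ∀ x : ι → ZMod (p ^ r), (if ∑ i, x i = 0 then (1 : ZMod p) else 0) =
        ∑ J, c J * ∏ i, (((x i).val.choose (J i) : ℕ) : ZMod p) := by
  have hq : NeZero (p ^ r) := ⟨(pow_pos (Fact.out : p.Prime).pos r).ne'⟩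
  refine ⟨fun J => ((1 + X : (ZMod p)[X]) ^ (p ^ r - 1) * X ^ (∑ i, (J i : ℕ))).coeff (p ^ r - 1),
    ?_, ?_⟩
  · intro J hJ
    by_contra hc
    apply hJ
    show ((1 + X : (ZMod p)[X]) ^ (p ^ r - 1) * X ^ (∑ i, (J i : ℕ))).coeff (p ^ r - 1) = 0
    rw [coeff_mul_X_pow', if_neg (by omega)]
  · intro x
    have hdvd : ∑ i, x i = 0 ↔ p ^ r ∣ ∑ i, (x i).val := by
      rw [← ZMod.natCast_eq_zero_iff]
      push_cast
      simp
    have hpow : ∀ i, (1 + X : (ZMod p)[X]) ^ (x i).val =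
        ∑ j : Fin (p ^ r), C ((((x i).val.choose j : ℕ) : ZMod p)) * X ^ (j : ℕ) := by
      intro i
      ext d
      rw [coeff_one_add_X_pow, finsetSum_coeff]
      simp only [coeff_C_mul_X_pow]
      by_cases hd : d < p ^ r
      · rw [Finset.sum_eq_single (⟨d, hd⟩ : Fin (p ^ r))]
        · simp
        · intro b _ hb
          rw [if_neg]
          intro e
          exact hb (Fin.ext e.symm)
        · simp
      · rw [Nat.choose_eq_zero_of_lt (lt_of_lt_of_le (ZMod.val_lt _) (not_lt.1 hd))]
        rw [Finset.sum_eq_zero]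
        · simp
        · intro b _
          rw [if_neg]
          have := b.2
          omega
    have hprod : (1 + X : (ZMod p)[X]) ^ (∑ i, (x i).val + (p ^ r - 1)) =
        ∑ J : ι → Fin (p ^ r), C (∏ i, (((x i).val.choose (J i) : ℕ) : ZMod p)) *
          ((1 + X) ^ (p ^ r - 1) * X ^ (∑ i, (J i : ℕ))) := by
      rw [pow_add, ← Finset.prod_pow_eq_pow_sum, Finset.prod_congr rfl fun i _ => hpow i,
        Fintype.prod_sum, Finset.sum_mul]
      refine Finset.sum_congr rfl fun J _ => ?_
      rw [Finset.prod_mul_distrib, Finset.prod_pow_eq_pow_sum, map_prod]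
      ring
    have := egz_delta p r (∑ i, (x i).val)
    rw [hprod, finsetSum_coeff] at this
    simp only [hdvd]
    rw [← this]
    refine Finset.sum_congr rfl fun J _ => ?_
    rw [coeff_C_mul, mul_comm]

/-- The bound on the size of a set all of whose zero-sum `q`-tuples are constant. -/
lemma egz_set_bound (p r n t : ℕ) [Fact p.Prime] (hn : 1 ≤ n) (ht : p ^ r = t + 2)
    (T : Finset (Fin n → ZMod (p ^ r)))
    (hT : ∀ x : Fin (t + 2) → (Fin n → ZMod (p ^ r)), (∀ i, x i ∈ T) → ∑ i, x i = 0 →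
      ∀ i, x i = x 0) : T.card ≤ 4 ^ n := by
  classical
  obtain ⟨c, hc, hexp⟩ := egz_expand p r (Fin (t + 2))
  let φ : (Fin n → Fin (p ^ r)) → T → ZMod p :=
    fun m a => ∏ l, (((a.1 l).val.choose (m l) : ℕ) : ZMod p)
  let M := {m : Fin n → Fin (p ^ r) // ∑ l, (m l : ℕ) < n}
  let L : (T → ZMod p) →ₗ[ZMod p] (M → ZMod p) :=
    Matrix.mulVecLin (Matrix.of fun (m : M) (a : T) => φ m.1 a)
  have hL : ∀ g ∈ LinearMap.ker L, ∀ m : Fin n → Fin (p ^ r), ∑ l, (m l : ℕ) < n →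
      ∑ a, φ m a * g a = 0 := by
    intro g hg m hm
    have := congrFun (LinearMap.mem_ker.1 hg) ⟨m, hm⟩
    simpa [L, Matrix.mulVec, dotProduct] using this
  have hV := egz_linalg t (LinearMap.ker L) (by
    intro g hg
    have h1 : ∑ a : T, ∏ i, g i a = ∑ w : Fin (t + 2) → T,
        (if ∑ i, (w i).1 = 0 then (1 : ZMod p) else 0) * ∏ i, g i (w i) := by
      refine Finset.sum_of_injOn (fun a _ => a) ?_ ?_ ?_ ?_
      · intro a _ b _ hab
        exact congrFun hab 0
      · intro a _
        simp
      · intro w _ hw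
        rw [if_neg, zero_mul]
        intro hsum
        apply hw
        refine ⟨w 0, by simp, ?_⟩
        funext i
        exact Subtype.ext (hT (fun i => (w i).1) (fun i => (w i).2) hsum i).symm
      · intro a _
        rw [if_pos, one_mul]
        rw [Finset.sum_const, Finset.card_univ, Fintype.card_fin, ← ht]
        funext l
        simp
    have h2 : ∀ w : Fin (t + 2) → T, (if ∑ i, (w i).1 = 0 then (1 : ZMod p) else 0) =
        ∑ J : Fin n → Fin (t + 2) → Fin (p ^ r), (∏ l, c (J l)) *
          ∏ i, φ (fun l => J l i) (w i) := by
      intro w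
      have e1 : (if ∑ i, (w i).1 = 0 then (1 : ZMod p) else 0) =
          ∏ l, (if ∑ i, (w i).1 l = 0 then (1 : ZMod p) else 0) := by
        rw [Finset.prod_ite_zero]
        simp [funext_iff, Finset.sum_apply]
      rw [e1, Finset.prod_congr rfl fun l _ => hexp fun i => (w i).1 l, Fintype.prod_sum]
      refine Finset.sum_congr rfl fun J _ => ?_
      rw [Finset.prod_mul_distrib, Finset.prod_comm]
    rw [h1]
    simp only [h2, Finset.sum_mul]
    rw [Finset.sum_comm]
    refine Finset.sum_eq_zero fun J _ => ?_
    simp only [mul_assoc, ← Finset.prod_mul_distrib]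
    rw [← Finset.mul_sum,
      ← Fintype.prod_sum (fun (i : Fin (t + 2)) (a : T) => φ (fun l => J l i) a * g i a)]
    by_cases hJ : ∀ l, c (J l) ≠ 0
    · have hdeg : ∃ i, ∑ l, (J l i : ℕ) < n := by
        by_contra hcon
        push Not at hcon
        have a1 : ∑ i : Fin (t + 2), n ≤ ∑ i, ∑ l, (J l i : ℕ) :=
          Finset.sum_le_sum fun i _ => hcon i
        rw [Finset.sum_comm] at a1
        have a2 : ∑ l, ∑ i, (J l i : ℕ) ≤ ∑ l : Fin n, (t + 1) :=
          Finset.sum_le_sum fun l _ => (hc _ (hJ l)).trans (by omega)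
        simp only [Finset.sum_const, Finset.card_univ, Fintype.card_fin, smul_eq_mul] at a1 a2
        have := a1.trans a2
        nlinarith
      obtain ⟨i, hi⟩ := hdeg
      rw [Finset.prod_eq_zero (Finset.mem_univ i) (hL _ (hg i) _ hi), mul_zero]
    · push Not at hJ
      obtain ⟨l, hl⟩ := hJ
      rw [Finset.prod_eq_zero (Finset.mem_univ l) hl, zero_mul])
  have hrk := LinearMap.finrank_range_add_finrank_ker L
  have hrange := Submodule.finrank_le (LinearMap.range L)
  rw [Module.finrank_fintype_fun_eq_card] at hrk hrange
  have hM : Fintype.card M =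
      (Finset.univ.filter fun m : Fin n → Fin (p ^ r) => ∑ l, (m l : ℕ) < n).card :=
    Fintype.card_subtype _
  have hcount := egz_count n (p ^ r)
  rw [← hM] at hcount
  rw [Fintype.card_coe] at hV hrk
  omega

lemma egz_exponent (k n : ℕ) (hn : 1 ≤ n) : AddMonoid.exponent (Fin n → ZMod k) = k := by
  apply Nat.dvd_antisymm
  · rw [AddMonoid.exponent_dvd_iff_forall_nsmul_eq_zero]
    intro g
    funext i
    simp
  · have := AddMonoid.exponent_nsmul_eq_zero (fun _ : Fin n => (1 : ZMod k))
    have := congrFun this ⟨0, hn⟩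
    rw [← ZMod.natCast_eq_zero_iff]
    simpa using this

lemma egz_le_map {α β : Type*} (f : α → β) (S : Multiset α) (T : Multiset β)
    (h : T ≤ S.map f) : ∃ U ≤ S, U.map f = T := by
  induction S using Quotient.inductionOn with
  | h l =>
    obtain ⟨l', hp, hs⟩ : ∃ l' : List β, l'.Perm T.toList ∧ l'.Sublist (l.map f) := by
      have h' : ((T.toList : List β) : Multiset β) ≤ ((l.map f : List β) : Multiset β) := by
        simpa using h
      rw [Multiset.coe_le] at h'
      exact h'
    obtain ⟨m, hm, rfl⟩ := List.sublist_map_iff.1 hs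
    refine ⟨(m : Multiset α), Multiset.coe_le.2 hm.subperm, ?_⟩
    rw [Multiset.map_coe, Multiset.coe_eq_coe.2 hp, Multiset.coe_toList]

lemma egz_exists_le {α : Type*} (S : Multiset α) (m : ℕ) (h : m ≤ Multiset.card S) :
    ∃ T ≤ S, Multiset.card T = m := by
  induction S using Quotient.inductionOn with
  | h l =>
    refine ⟨(l.take m : List α), Multiset.coe_le.2 (List.take_sublist m l).subperm, ?_⟩
    have : m ≤ l.length := by simpa using h
    simpa using this

/-- every sufficiently long multiset contains a zero-sum sub-multiset of size `m`;
stated with integer vectors. -/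
def EgzGood (n m L : ℕ) : Prop :=
  ∀ S : Multiset (Fin n → ℤ), L ≤ Multiset.card S →
    ∃ T ≤ S, Multiset.card T = m ∧ ∀ i, (m : ℤ) ∣ T.sum i

lemma egz_good_of (n m L : ℕ) (h : ∀ S : Multiset (Fin n → ZMod m), L ≤ Multiset.card S →
    ∃ T ≤ S, Multiset.card T = m ∧ T.sum = 0) : EgzGood n m L := by
  intro S hS
  let f : (Fin n → ℤ) →+ (Fin n → ZMod m) := (Int.castAddHom (ZMod m)).compLeft (Fin n)
  obtain ⟨T, hT, hc, hs⟩ := h (S.map f) (by simpa using hS)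
  obtain ⟨U, hU, rfl⟩ := egz_le_map f S T hT
  refine ⟨U, hU, by simpa using hc, fun i => ?_⟩
  rw [← ZMod.intCast_zmod_eq_zero_iff_dvd] 
  rw [← map_multiset_sum] at hs
  exact congrFun hs i

lemma egz_of_good (n m L : ℕ) (h : EgzGood n m L) (S : Multiset (Fin n → ZMod m))
    (hS : L ≤ Multiset.card S) : ∃ T ≤ S, Multiset.card T = m ∧ T.sum = 0 := by
  let f : (Fin n → ℤ) →+ (Fin n → ZMod m) := (Int.castAddHom (ZMod m)).compLeft (Fin n)
  let g : (Fin n → ZMod m) → (Fin n → ℤ) := fun x i => (x i).cast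
  have hfg : ∀ x, f (g x) = x := by
    intro x
    funext i
    simp [f, g]
  obtain ⟨T, hT, hc, hs⟩ := h (S.map g) (by simpa using hS)
  refine ⟨T.map f, ?_, by simpa using hc, ?_⟩
  · have := Multiset.map_le_map (f := f) hT
    rw [Multiset.map_map] at this
    simpa [Function.comp_def, hfg] using this
  · rw [← map_multiset_sum]
    funext i
    exact (ZMod.intCast_zmod_eq_zero_iff_dvd _ _).2 (hs i)

lemma egz_extract (n a L : ℕ) (h : EgzGood n a L) (t : ℕ) : ∀ S : Multiset (Fin n → ℤ),
    a * t + L ≤ Multiset.card S → ∃ R : Multiset (Multiset (Fin n → ℤ)),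
      Multiset.card R = t + 1 ∧ R.sum ≤ S ∧
        ∀ U ∈ R, Multiset.card U = a ∧ ∀ i, (a : ℤ) ∣ U.sum i := by
  induction t with
  | zero =>
    intro S hS
    obtain ⟨U, hU, h1, h2⟩ := h S (by omega)
    refine ⟨{U}, by simp, by simpa using hU, ?_⟩
    intro V hV
    rw [Multiset.mem_singleton] at hV
    subst hV
    exact ⟨h1, h2⟩
  | succ t ih =>
    intro S hS
    obtain ⟨U, hU, h1, h2⟩ := h S (le_trans (by omega) hS)
    obtain ⟨W, rfl⟩ := Multiset.le_iff_exists_add.1 hU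
    rw [Multiset.card_add, h1] at hS
    obtain ⟨R, hR, hle, hall⟩ := ih W (by rw [mul_add] at hS; omega)
    refine ⟨U ::ₘ R, by simp [hR], ?_, ?_⟩
    · rw [Multiset.sum_cons]
      gcongr
    · intro V hV
      rw [Multiset.mem_cons] at hV
      rcases hV with rfl | hV
      · exact ⟨h1, h2⟩
      · exact hall V hV

lemma egz_good_mul (n a b A B : ℕ) (ha : EgzGood n a A) (hb : EgzGood n b (B + 1)) :
    EgzGood n (a * b) (a * B + A) := by
  intro S hS
  obtain ⟨R, hR, hle, hall⟩ := egz_extract n a A ha B S hS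
  let d : Multiset (Fin n → ℤ) → (Fin n → ℤ) := fun U i => U.sum i / a
  obtain ⟨Q, hQ, hQc, hQs⟩ := hb (R.map d) (by simp [hR])
  obtain ⟨P, hP, rfl⟩ := egz_le_map d R Q hQ
  rw [Multiset.card_map] at hQc
  have key : ∀ P : Multiset (Multiset (Fin n → ℤ)),
      (∀ U ∈ P, Multiset.card U = a ∧ ∀ i, (a : ℤ) ∣ U.sum i) →
      Multiset.card P.sum = a * Multiset.card P ∧
        ∀ i, P.sum.sum i = a * (P.map d).sum i := by
    intro P
    induction P using Multiset.induction_on with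
    | empty => simp
    | cons U P ih =>
      intro hUP
      obtain ⟨i1, i2⟩ := ih fun V hV => hUP V (Multiset.mem_cons_of_mem hV)
      obtain ⟨u1, u2⟩ := hUP U (Multiset.mem_cons_self U P)
      constructor
      · simp only [Multiset.sum_cons, Multiset.card_add, Multiset.card_cons, i1, u1]
        ring
      · intro i
        simp only [Multiset.sum_cons, Multiset.sum_add, Multiset.map_cons, Pi.add_apply, i2, mul_add]
        rw [Int.mul_ediv_cancel' (u2 i)]
  obtain ⟨k1, k2⟩ := key P fun U hU => hall U (Multiset.mem_of_le hP hU)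
  refine ⟨P.sum, ?_, by rw [k1, hQc], fun i => ?_⟩
  · obtain ⟨W, rfl⟩ := Multiset.le_iff_exists_add.1 hP
    rw [Multiset.sum_add] at hle
    exact (Multiset.le_add_right _ _).trans hle
  · rw [k2 i]
    push_cast
    exact mul_dvd_mul_left _ (hQs i)

lemma egz_prime_pow (p r n : ℕ) (hp : p.Prime) (hr : 0 < r) (hn : 1 ≤ n)
    (hD : PropertyD (Fin n → ZMod (p ^ r))) : EgzGood n (p ^ r) ((p ^ r - 1) * 4 ^ n + 1) := by
  classical
  have : Fact p.Prime := ⟨hp⟩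
  have hexp := egz_exponent (p ^ r) n hn
  have hq2 : 2 ≤ p ^ r := hp.two_le.trans (Nat.le_self_pow hr.ne' p)
  obtain ⟨t, ht⟩ : ∃ t, p ^ r = t + 2 := ⟨p ^ r - 2, by omega⟩
  have : NeZero (p ^ r) := ⟨by omega⟩
  set G := Fin n → ZMod (p ^ r) with hG
  set K : Set ℕ := {k | ∀ S : Multiset G, Multiset.card S = k →
    ∃ T ≤ S, Multiset.card T = AddMonoid.exponent G ∧ T.sum = 0} with hK
  have hEGZ : EGZ G = sInf K := rfl
  -- a zero-sum free multiset has small multiplicities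
  have hcount : ∀ S : Multiset G,
      (¬∃ T ≤ S, Multiset.card T = AddMonoid.exponent G ∧ T.sum = 0) →
      ∀ a, S.count a < p ^ r := by
    intro S hS a
    by_contra hc
    refine hS ⟨Multiset.replicate (p ^ r) a, Multiset.le_count_iff_replicate_le.1 (not_lt.1 hc),
      by rw [Multiset.card_replicate]; exact hexp.symm, ?_⟩
    rw [Multiset.sum_replicate]
    funext i
    show (p ^ r) • (a i) = 0
    rw [nsmul_eq_mul, ZMod.natCast_self, zero_mul]
  have hne : K.Nonempty := by
    refine ⟨Fintype.card G * p ^ r, ?_⟩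
    intro S hS
    by_contra hcon
    have h1 := hcount S hcon
    have h2 : ∑ a : G, S.count a = Multiset.card S :=
      Multiset.sum_count_eq_card fun a _ => Finset.mem_univ a
    have h3 : ∑ a : G, S.count a < ∑ a : G, p ^ r :=
      Finset.sum_lt_sum_of_nonempty Finset.univ_nonempty fun a _ => h1 a
    rw [h2, hS, Finset.sum_const, Finset.card_univ, smul_eq_mul] at h3
    exact lt_irrefl _ h3
  have hmem : EGZ G ∈ K := Nat.sInf_mem hne
  have hbound : EGZ G ≤ (p ^ r - 1) * 4 ^ n + 1 := by
    rcases Nat.eq_zero_or_pos (EGZ G) with h0 | hpos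
    · omega
    have hnot : EGZ G - 1 ∉ K := Nat.notMem_of_lt_sInf (by rw [← hEGZ]; omega)
    simp only [hK, Set.mem_ofPred_eq, not_forall] at hnot
    obtain ⟨S, hS, hfree⟩ := hnot
    have hmult := hD S hS hfree
    rw [hexp] at hmult
    have hcard : Multiset.card S = S.toFinset.card * (p ^ r - 1) := by
      rw [← Multiset.toFinset_sum_count_eq, Finset.sum_congr rfl fun a ha =>
        hmult a (Multiset.mem_toFinset.1 ha), Finset.sum_const, smul_eq_mul]
    have hT := egz_set_bound p r n t hn ht S.toFinset (by
      intro x hx hsum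
      by_contra hcon
      push Not at hcon
      obtain ⟨i, hi⟩ := hcon
      refine hfree ⟨Finset.univ.val.map x, ?_, ?_, ?_⟩
      · rw [Multiset.le_iff_count]
        intro a
        by_cases ha : a ∈ S
        · rw [hmult a ha]
          by_contra hc
          have h1 : Multiset.count a (Finset.univ.val.map x) ≤ Multiset.card (Finset.univ.val.map x) :=
            Multiset.count_le_card _ _
          have h2 : Multiset.card (Finset.univ.val.map x) = t + 2 := by simp
          have h3 : Multiset.count a (Finset.univ.val.map x) =
            Multiset.card (Finset.univ.val.map x) := by omega
          rw [Multiset.count_eq_card] at h3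
          have h4 : ∀ j, a = x j := fun j => h3 _ (Multiset.mem_map_of_mem x (Finset.mem_univ j))
          exact hi ((h4 i).symm.trans (h4 0))
        · rw [Multiset.count_eq_zero_of_notMem]
          · exact Nat.zero_le _
          · intro hm
            obtain ⟨j, _, rfl⟩ := Multiset.mem_map.1 hm
            exact ha (Multiset.mem_toFinset.1 (hx j))
      · rw [hexp]
        simp [ht]
      · exact hsum)
    have := Nat.mul_le_mul_right (p ^ r - 1) hT
    rw [← hcard, hS, mul_comm] at this
    omega
  apply egz_good_of
  intro S hS
  obtain ⟨S', hS', hc⟩ := egz_exists_le _ _ (hbound.trans hS)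
  obtain ⟨T, hT, h1, h2⟩ := hmem S' hc
  exact ⟨T, hT.trans hS', by rw [h1, hexp], h2⟩

lemma egz_good_all (n : ℕ) (k : ℕ) (hk : k ≠ 0)
    (h : ∀ p ∈ k.primeFactors, EgzGood n (p ^ k.factorization p)
      ((p ^ k.factorization p - 1) * 4 ^ n + 1)) : EgzGood n k ((k - 1) * 4 ^ n + 1) := by
  induction k using Nat.recOnPosPrimePosCoprime with
  | zero => exact absurd rfl hk
  | one =>
    intro S hS
    obtain ⟨T, hT, hc⟩ := egz_exists_le _ _ (le_trans (Nat.le_add_left _ _) hS)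
    exact ⟨T, hT, hc, fun i => by simp⟩
  | prime_pow p r hp hr =>
    have := h p (by simp [Nat.primeFactors_prime_pow hr.ne' hp])
    rwa [hp.factorization_pow, Finsupp.single_eq_same] at this
  | coprime a b ha hb hab iha ihb =>
    have ha' := iha (by omega) fun p hp => by
      have := h p (by rw [hab.primeFactors_mul]; exact Finset.mem_union_left _ hp)
      rwa [Nat.factorization_eq_of_coprime_left hab (Nat.mem_primeFactors_iff_mem_primeFactorsList.1 hp)] at this
    have hb' := ihb (by omega) fun p hp => by
      have := h p (by rw [hab.primeFactors_mul]; exact Finset.mem_union_right _ hp)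
      rwa [Nat.factorization_eq_of_coprime_right hab (Nat.mem_primeFactors_iff_mem_primeFactorsList.1 hp)] at this
    have := egz_good_mul n a b _ _ ha' hb'
    have e : a * ((b - 1) * 4 ^ n) + ((a - 1) * 4 ^ n + 1) = (a * b - 1) * 4 ^ n + 1 := by
      obtain ⟨a, rfl⟩ : ∃ a', a = a' + 1 := ⟨a - 1, by omega⟩
      obtain ⟨b, rfl⟩ : ∃ b', b = b' + 1 := ⟨b - 1, by omega⟩
      have : (a + 1) * (b + 1) - 1 = (a + 1) * b + a := by
        rw [mul_add, mul_one, ← add_assoc, Nat.add_sub_cancel]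
      rw [this]
      simp only [Nat.add_sub_cancel]
      ring
    rwa [e] at this

theorem stmt_3 (k n : ℕ) (hk : 2 ≤ k) (hn : 1 ≤ n)
    (hD : ∀ p ∈ k.primeFactors, PropertyD (Fin n → ZMod (p ^ k.factorization p))) :
    EGZ (Fin n → ZMod k) ≤ (k - 1) * 4 ^ n + k := by
  have hgood := egz_good_all n k (by omega) fun p hp =>
    egz_prime_pow p _ n (Nat.prime_of_mem_primeFactors hp)
      ((Nat.prime_of_mem_primeFactors hp).factorization_pos_of_dvd (by omega)
        (Nat.dvd_of_mem_primeFactors hp)) hn (hD p hp)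
  apply Nat.sInf_le
  intro S hS
  rw [egz_exponent k n hn]
  exact egz_of_good n k _ hgood S (by omega)
end

section
/- Let q be a prime power and n ≥ 1. Suppose A ⊆ (ℤ/qℤ)^n satisfies |A| > γ_q^n, where γ_q = inf_{0<x<1} ((1 − x^q)/(1 − x)) · x^{−(q−1)/q}. Then there exist q elements x₁, …, x_q ∈ A, not necessarily distinct but not all equal, with x₁ + ⋯ + x_q = 0. -/
/-- `γ_q = inf_{0<t<1} ((1-t^q)/(1-t)) · t^{-(q-1)/q}`. -/
noncomputable def gammaConst (q : ℕ) : ℝ :=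
  sInf {y : ℝ | ∃ t : ℝ, 0 < t ∧ t < 1 ∧
    y = (1 - t ^ q) / (1 - t) * t ^ (-(((q : ℝ) - 1) / q))}

open Polynomial in
lemma aux_ind {κ : Type} [Fintype κ] [DecidableEq κ] (p k q : ℕ) [Fact p.Prime] (hq : q = p ^ k)
    [NeZero q] (y : κ → ZMod q) :
    (if ∑ i, y i = 0 then (1 : ZMod p) else 0) =
      ∑ d : κ → Fin q, (((1 + X) ^ (q - 1) * X ^ (∑ i, (d i : ℕ)) : (ZMod p)[X]).coeff (q - 1)) *
        ∏ i, (((y i).val.choose (d i) : ℕ) : ZMod p) := by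
  have hq0 : 0 < q := Nat.pos_of_ne_zero (NeZero.ne q)
  have h1 : ∀ v : ZMod q, ((1 + X) ^ v.val : (ZMod p)[X]) =
      ∑ d : Fin q, C ((v.val.choose d : ℕ) : ZMod p) * X ^ (d : ℕ) := by
    intro v
    ext m
    rw [coeff_one_add_X_pow, finsetSum_coeff]
    simp only [coeff_C_mul, coeff_X_pow]
    by_cases hm : m < q
    · rw [Finset.sum_eq_single (⟨m, hm⟩ : Fin q)]
      · simp
      · intro b _ hb
        rw [if_neg, mul_zero]
        intro h; apply hb; ext; exact h.symm
      · simp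
    · rw [Nat.choose_eq_zero_of_lt (lt_of_lt_of_le (ZMod.val_lt v) (not_lt.mp hm)), Finset.sum_eq_zero]
      · simp
      · intro b _
        rw [if_neg, mul_zero]
        have := b.2
        omega
  have h2 : ∑ d : κ → Fin q, (((1 + X) ^ (q - 1) * X ^ (∑ i, (d i : ℕ)) : (ZMod p)[X]).coeff (q - 1)) *
        ∏ i, (((y i).val.choose (d i) : ℕ) : ZMod p)
      = ((1 + X) ^ (q - 1) * ∏ i, (1 + X) ^ (y i).val : (ZMod p)[X]).coeff (q - 1) := by
    simp_rw [h1]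
    rw [Finset.prod_univ_sum, Finset.mul_sum, finsetSum_coeff]
    rw [Fintype.piFinset_univ]
    refine Finset.sum_congr rfl fun d _ => ?_
    rw [Finset.prod_mul_distrib, Finset.prod_pow_eq_pow_sum, ← map_prod, mul_left_comm, coeff_C_mul,
      mul_comm]
  rw [h2, Finset.prod_pow_eq_pow_sum, ← pow_add]
  set M := ∑ i, (y i).val with hM
  have h3 : ∑ i, y i = 0 ↔ q ∣ M := by
    rw [← ZMod.natCast_eq_zero_iff, hM]
    simp
  have h4 : ((1 + X) ^ q : (ZMod p)[X]) = 1 + X ^ q := by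
    rw [hq, add_pow_char_pow, one_pow]
  have h5 : ((1 + X) ^ (q - 1 + M) : (ZMod p)[X]).coeff (q - 1)
      = (((q - 1 + M) % q).choose (q - 1) : ℕ) := by
    conv_lhs => rw [← Nat.mod_add_div (q - 1 + M) q, pow_add, pow_mul, h4]
    obtain ⟨g, hg⟩ : (X ^ q : (ZMod p)[X]) ∣ (1 + X ^ q) ^ ((q - 1 + M) / q) - 1 := by
      have := sub_dvd_pow_sub_pow (1 + X ^ q : (ZMod p)[X]) 1 ((q - 1 + M) / q)
      simpa using this
    rw [sub_eq_iff_eq_add] at hg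
    rw [hg, mul_add, mul_one, coeff_add, coeff_one_add_X_pow, mul_left_comm, coeff_X_pow_mul',
      if_neg (by omega), zero_add]
  rw [h5]
  simp only [h3]
  split_ifs with h
  · obtain ⟨a, ha⟩ := h
    have : (q - 1 + M) % q = q - 1 := by
      rw [ha, Nat.add_mul_mod_self_left, Nat.mod_eq_of_lt (by omega)]
    rw [this]; simp
  · have : (q - 1 + M) % q < q - 1 := by
      have h6 := Nat.mod_lt (q - 1 + M) hq0
      have h7 := Nat.mod_add_div (q - 1 + M) q
      by_contra h8
      apply h
      have h9 : (q - 1 + M) % q = q - 1 := by omega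
      rw [h9] at h7
      exact ⟨(q - 1 + M) / q, by omega⟩
    rw [Nat.choose_eq_zero_of_lt this]; simp

/-- low-degree exponent vectors -/
def lowSet (ι : Type) [Fintype ι] [DecidableEq ι] (q : ℕ) : Finset (ι → Fin q) :=
  Finset.univ.filter fun α => q * ∑ j, (α j : ℕ) ≤ Fintype.card ι * (q - 1)

open Polynomial in
lemma aux_prod {ι κ : Type} [Fintype ι] [DecidableEq ι] [Fintype κ] [DecidableEq κ]
    (p k q : ℕ) [Fact p.Prime] (hq : q = p ^ k) [NeZero q] (hκ : Fintype.card κ = q)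
    (A : Finset (ι → ZMod q)) (h : κ → A → ZMod p)
    (hh : ∀ i, ∀ α ∈ lowSet ι q, ∑ x : A, h i x * ∏ j, ((((x : ι → ZMod q) j).val.choose (α j) : ℕ) : ZMod p) = 0) :
    ∑ x : κ → A, (if ∑ i, (x i : ι → ZMod q) = 0 then (1 : ZMod p) else 0) * ∏ i, h i (x i) = 0 := by
  have hq0 : 0 < q := Nat.pos_of_ne_zero (NeZero.ne q)
  set c : (κ → Fin q) → ZMod p := fun d =>
    ((1 + X) ^ (q - 1) * X ^ (∑ i, (d i : ℕ)) : (ZMod p)[X]).coeff (q - 1) with hc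
  have h1 : ∀ x : κ → A, (if ∑ i, (x i : ι → ZMod q) = 0 then (1 : ZMod p) else 0) =
      ∑ δ : ι → κ → Fin q, (∏ j, c (δ j)) *
        ∏ i, ∏ j, ((((x i : ι → ZMod q) j).val.choose (δ j i) : ℕ) : ZMod p) := by
    intro x
    have : (if ∑ i, (x i : ι → ZMod q) = 0 then (1 : ZMod p) else 0) =
        ∏ j, (if ∑ i, (x i : ι → ZMod q) j = 0 then (1 : ZMod p) else 0) := by
      rw [Finset.prod_ite_zero]
      simp [funext_iff]
    rw [this]
    simp_rw [aux_ind p k q hq]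
    rw [Finset.prod_univ_sum, Fintype.piFinset_univ]
    refine Finset.sum_congr rfl fun δ _ => ?_
    rw [Finset.prod_mul_distrib, Finset.prod_comm (s := (Finset.univ : Finset κ))]
  simp_rw [h1, Finset.sum_mul]
  rw [Finset.sum_comm]
  refine Finset.sum_eq_zero fun δ _ => ?_
  simp_rw [mul_assoc, ← Finset.prod_mul_distrib]
  rw [← Finset.mul_sum]
  by_cases hδ : ∀ j, ∑ i, (δ j i : ℕ) ≤ q - 1
  · have hex : ∃ i, (fun j => δ j i) ∈ lowSet ι q := by
      by_contra hne
      push Not at hne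
      simp only [lowSet, Finset.mem_filter, Finset.mem_univ, true_and, not_le] at hne
      have hne' : (Finset.univ : Finset κ).Nonempty := by
        rw [Finset.univ_nonempty_iff, ← Fintype.card_pos_iff]; omega
      have s1 := Finset.sum_lt_sum_of_nonempty hne' (fun i _ => hne i)
      rw [Finset.sum_const, Finset.card_univ, hκ, smul_eq_mul, ← Finset.mul_sum,
        Finset.sum_comm] at s1
      have s2 := Finset.sum_le_sum (fun j (_ : j ∈ Finset.univ) => hδ j)
      rw [Finset.sum_const, Finset.card_univ, smul_eq_mul] at s2
      exact absurd (lt_of_mul_lt_mul_left s1 (Nat.zero_le q)) (not_lt.mpr s2)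
    obtain ⟨i, hi⟩ := hex
    have := Finset.prod_univ_sum (fun _ : κ => (Finset.univ : Finset A))
      (fun i x => (∏ j, ((((x : ι → ZMod q) j).val.choose (δ j i) : ℕ) : ZMod p)) * h i x)
    rw [Fintype.piFinset_univ] at this
    rw [← this, Finset.prod_eq_zero (Finset.mem_univ i), mul_zero]
    rw [← hh i _ hi]
    exact Finset.sum_congr rfl fun x _ => mul_comm _ _
  · push Not at hδ
    obtain ⟨j, hj⟩ := hδ
    rw [Finset.prod_eq_zero (Finset.mem_univ j), zero_mul]
    rw [hc]
    simp only
    rw [coeff_mul_X_pow', if_neg (by omega)]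

lemma aux_lin {B F : Type} [Fintype B] [Field F] (V : Submodule F (B → F)) (e : ℕ)
    (hV : ∀ h ∈ V, ∀ v ∈ V, ∀ w ∈ V, ∑ x, v x * w x * h x ^ e = 0) :
    2 * Module.finrank F V ≤ Fintype.card B := by
  classical
  -- element of maximal support
  obtain ⟨h, hhV, hmax⟩ : ∃ h ∈ V, ∀ g ∈ V,
      (Finset.univ.filter fun x => g x ≠ 0).card ≤ (Finset.univ.filter fun x => h x ≠ 0).card := by
    have hfin : Set.Finite {m | ∃ g ∈ V, (Finset.univ.filter fun x => g x ≠ 0).card = m} := by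
      refine (Set.finite_Iic (Fintype.card B)).subset ?_
      rintro m ⟨g, _, rfl⟩
      exact Finset.card_le_univ _
    obtain ⟨m, ⟨h, hh, rfl⟩, hm⟩ := Set.exists_max_image _ id hfin ⟨_, 0, V.zero_mem, rfl⟩
    exact ⟨h, hh, fun g hg => hm _ ⟨g, hg, rfl⟩⟩
  have hinj : ∀ v ∈ V, (∀ x, h x ≠ 0 → v x = 0) → v = 0 := by
    intro v hv hvx
    by_contra hne
    obtain ⟨y, hy⟩ := Function.ne_iff.mp hne
    have hlt := hmax (h + v) (V.add_mem hhV hv)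
    refine absurd hlt (not_le.mpr (Finset.card_lt_card ?_))
    rw [Finset.ssubset_iff_of_subset]
    · refine ⟨y, ?_, ?_⟩
      · have : h y = 0 := by
          by_contra h0
          exact hy (hvx y h0)
        simpa [this] using hy
      · simp only [Finset.mem_filter, Finset.mem_univ, true_and, not_not]
        by_contra h0
        exact hy (hvx y h0)
    · intro x hx
      simp only [Finset.mem_filter, Finset.mem_univ, true_and] at hx ⊢
      simpa [hvx x hx] using hx
  let Φ : V →ₗ[F] Module.Dual F (B → F) :=
    { toFun := fun v =>
        { toFun := fun w => ∑ x, v.1 x * w x * h x ^ e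
          map_add' := by
            intro a b; rw [← Finset.sum_add_distrib]
            exact Finset.sum_congr rfl fun x _ => by simp only [Pi.add_apply]; ring
          map_smul' := by
            intro a b; rw [RingHom.id_apply, smul_eq_mul, Finset.mul_sum]
            exact Finset.sum_congr rfl fun x _ => by simp only [Pi.smul_apply, smul_eq_mul]; ring }
      map_add' := by
        intro a b; refine LinearMap.ext fun w => ?_
        simp only [LinearMap.coe_mk, AddHom.coe_mk, LinearMap.add_apply]
        rw [← Finset.sum_add_distrib]
        exact Finset.sum_congr rfl fun x _ => by simp only [Submodule.coe_add, Pi.add_apply]; ring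
      map_smul' := by
        intro a b; refine LinearMap.ext fun w => ?_
        simp only [LinearMap.coe_mk, AddHom.coe_mk, LinearMap.smul_apply, RingHom.id_apply, smul_eq_mul]
        rw [Finset.mul_sum]
        exact Finset.sum_congr rfl fun x _ => by
          simp only [Submodule.coe_smul, Pi.smul_apply, smul_eq_mul]; ring }
  have hΦ : ∀ v w, Φ v w = ∑ x, v.1 x * w x * h x ^ e := fun _ _ => rfl
  have hΦinj : Function.Injective Φ := by
    rw [← LinearMap.ker_eq_bot, LinearMap.ker_eq_bot']
    intro v hv
    apply Subtype.ext
    refine hinj v.1 v.2 fun x hx => ?_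
    have := LinearMap.congr_fun hv (Pi.single x 1)
    rw [hΦ, Finset.sum_eq_single x] at this
    · simpa [hx] using this
    · intro b _ hb; simp [hb]
    · simp
  have hle : LinearMap.range Φ ≤ V.dualAnnihilator := by
    rintro _ ⟨v, rfl⟩
    rw [Submodule.mem_dualAnnihilator]
    intro w hw
    exact hV h hhV v v.2 w hw
  have e1 := Submodule.finrank_mono hle
  rw [LinearMap.finrank_range_of_inj hΦinj] at e1
  have e2 := Subspace.finrank_add_finrank_dualAnnihilator_eq V
  rw [Module.finrank_fintype_fun_eq_card] at e2
  omega

lemma aux_main {ι : Type} [Fintype ι] [DecidableEq ι] (p k q : ℕ) [Fact p.Prime] (hq : q = p ^ k)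
    (hq2 : 2 ≤ q) (A : Finset (ι → ZMod q))
    (hA : ∀ x : Fin q → (ι → ZMod q), (∀ i, x i ∈ A) → ∑ i, x i = 0 → ∀ i j, x i = x j) :
    A.card ≤ 2 * (lowSet ι q).card := by
  have : NeZero q := ⟨by omega⟩
  let Ψ : (A → ZMod p) →ₗ[ZMod p] (lowSet ι q → ZMod p) :=
    Matrix.mulVecLin (Matrix.of fun (α : lowSet ι q) (x : A) =>
      ∏ j, ((((x : ι → ZMod q) j).val.choose (α.1 j) : ℕ) : ZMod p))
  have hΨ : ∀ h ∈ LinearMap.ker Ψ, ∀ α ∈ lowSet ι q,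
      ∑ x : A, h x * ∏ j, ((((x : ι → ZMod q) j).val.choose (α j) : ℕ) : ZMod p) = 0 := by
    intro h hh α hα
    have := congrFun (LinearMap.mem_ker.mp hh) ⟨α, hα⟩
    rw [Pi.zero_apply] at this
    rw [← this]
    simp only [Ψ, Matrix.mulVecLin_apply, Matrix.mulVec, dotProduct, Matrix.of_apply]
    exact Finset.sum_congr rfl fun x _ => mul_comm _ _
  have key := aux_lin (LinearMap.ker Ψ) (q - 2) (by
    intro h hh v hv w hw
    let i0 : Fin q := ⟨0, by omega⟩
    let i1 : Fin q := ⟨1, by omega⟩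
    have h01 : i1 ≠ i0 := by simp [i0, i1]
    let H : Fin q → A → ZMod p := fun i => if i = i0 then v else if i = i1 then w else h
    have hp := aux_prod p k q hq (Fintype.card_fin q) A H (by
      intro i
      simp only [H]
      split_ifs
      · exact hΨ v hv
      · exact hΨ w hw
      · exact hΨ h hh)
    have hprod : ∀ x, ∏ i, H i x = v x * w x * h x ^ (q - 2) := by
      intro x
      rw [← Finset.mul_prod_erase _ _ (Finset.mem_univ i0),
        ← Finset.mul_prod_erase _ _ (Finset.mem_erase.mpr ⟨h01, Finset.mem_univ i1⟩)]
      rw [Finset.prod_congr rfl (g := fun _ => h x)]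
      · rw [Finset.prod_const, Finset.card_erase_of_mem (by simp [h01]),
          Finset.card_erase_of_mem (by simp), Finset.card_univ, Fintype.card_fin]
        simp only [H, if_true, if_neg h01]
        rw [mul_assoc]; rfl
      · intro i hi
        simp only [Finset.mem_erase] at hi
        simp only [H, if_neg hi.1, if_neg hi.2.1]
    rw [← hp]
    symm
    rw [← Finset.sum_subset (Finset.subset_univ (Finset.univ.image fun (a : A) (_ : Fin q) => a))]
    · rw [Finset.sum_image]
      · refine Finset.sum_congr rfl fun x _ => ?_
        rw [if_pos, one_mul, hprod]
        rw [Finset.sum_const, Finset.card_univ, Fintype.card_fin]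
        ext j
        simp
      · intro a _ b _ hab
        exact congrFun hab i0
    · intro x _ hx
      rw [if_neg, zero_mul]
      intro h0
      apply hx
      have := hA (fun i => x i) (fun i => (x i).2) h0
      rw [Finset.mem_image]
      refine ⟨x i0, Finset.mem_univ _, ?_⟩
      funext i
      exact Subtype.ext (this i0 i))
  have r1 := LinearMap.finrank_range_add_finrank_ker Ψ
  have r2 := Submodule.finrank_le (LinearMap.range Ψ)
  rw [Module.finrank_fintype_fun_eq_card] at r1 r2
  simp only [Fintype.card_coe] at *
  omega

lemma aux_count {ι : Type} [Fintype ι] [DecidableEq ι] (q : ℕ) (hq2 : 2 ≤ q) (t : ℝ) (h0 : 0 < t)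
    (h1 : t < 1) :
    ((lowSet ι q).card : ℝ) ≤
      ((1 - t ^ q) / (1 - t) * t ^ (-(((q : ℝ) - 1) / q))) ^ Fintype.card ι := by
  have hq0 : (0 : ℝ) < q := by positivity
  have hg : (1 - t ^ q) / (1 - t) = ∑ d : Fin q, t ^ (d : ℕ) := by
    rw [Fin.sum_univ_eq_sum_range (fun d => t ^ d), geom_sum_eq h1.ne, ← neg_div_neg_eq]
    simp
  set N := Fintype.card ι
  have e1 : ((∑ d : Fin q, t ^ (d : ℕ)) ^ N) = ∑ α : ι → Fin q, t ^ (∑ j, (α j : ℕ)) := by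
    have := Finset.prod_univ_sum (fun _ : ι => (Finset.univ : Finset (Fin q)))
      (fun _ d => t ^ (d : ℕ))
    rw [Finset.prod_const, Finset.card_univ, Fintype.piFinset_univ] at this
    rw [this]
    exact Finset.sum_congr rfl fun α _ => Finset.prod_pow_eq_pow_sum _ _ _
  have e2 : ((lowSet ι q).card : ℝ) * (t ^ (((q : ℝ) - 1) / q)) ^ N ≤
      (∑ d : Fin q, t ^ (d : ℕ)) ^ N := by
    rw [e1, ← nsmul_eq_mul, ← Finset.sum_const]
    refine le_trans (Finset.sum_le_sum (g := fun α => t ^ (∑ j, (α j : ℕ))) ?_)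
      (Finset.sum_le_sum_of_subset_of_nonneg (Finset.subset_univ _) (fun _ _ _ => by positivity))
    intro α hα
    simp only [lowSet, Finset.mem_filter, Finset.mem_univ, true_and] at hα
    rw [← Real.rpow_natCast, ← Real.rpow_natCast, ← Real.rpow_mul h0.le]
    apply Real.rpow_le_rpow_of_exponent_ge h0 h1.le
    have hα' : (q : ℝ) * ((∑ j, (α j : ℕ) : ℕ) : ℝ) ≤ N * ((q : ℝ) - 1) := by
      have : ((q * ∑ j, (α j : ℕ) : ℕ) : ℝ) ≤ ((N * (q - 1) : ℕ) : ℝ) := by exact_mod_cast hα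
      rw [Nat.cast_mul, Nat.cast_mul, Nat.cast_sub (by omega), Nat.cast_one] at this
      exact this
    rw [div_mul_eq_mul_div, le_div_iff₀ hq0]
    linarith
  rw [hg, mul_pow, Real.rpow_neg h0.le, inv_pow, ← div_eq_mul_inv, le_div_iff₀ (by positivity)]
  exact e2

theorem stmt_12 (q n : ℕ) (hq : IsPrimePow q) (hn : 1 ≤ n)
    (A : Finset (Fin n → ZMod q)) (hA : gammaConst q ^ n < (A.card : ℝ)) :
    ∃ x : Fin q → (Fin n → ZMod q),
      (∀ i, x i ∈ A) ∧ ¬(∀ i j, x i = x j) ∧ ∑ i, x i = 0 := by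
  by_contra hcon
  push Not at hcon
  have hno : ∀ x : Fin q → (Fin n → ZMod q), (∀ i, x i ∈ A) → ∑ i, x i = 0 → ∀ i j, x i = x j := by
    intro x hx hs
    by_contra hne
    refine hcon x hx ?_ hs
    push Not at hne
    exact hne
  have hq2 : 2 ≤ q := hq.two_le
  obtain ⟨p, k, hp, hk, hpk⟩ := hq
  have : Fact p.Prime := ⟨hp.nat_prime⟩
  -- find a good t
  have hbound : ∀ t : ℝ, 0 < t → t < 1 →
      (A.card : ℝ) ≤ ((1 - t ^ q) / (1 - t) * t ^ (-(((q : ℝ) - 1) / q))) ^ n := by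
    intro t h0 h1
    set y := (1 - t ^ q) / (1 - t) * t ^ (-(((q : ℝ) - 1) / q)) with hy
    have hy0 : 0 < y := by
      have : t ^ q < 1 := pow_lt_one₀ h0.le h1 (by omega)
      have : 0 < 1 - t ^ q := by linarith
      have : 0 < 1 - t := by linarith
      positivity
    have hm : ∀ m : ℕ, (A.card : ℝ) ^ m ≤ 2 * (y ^ n) ^ m := by
      intro m
      let E := (Equiv.curry (Fin m) (Fin n) (ZMod q)).symm
      let A' : Finset (Fin m × Fin n → ZMod q) :=
        (Fintype.piFinset fun _ : Fin m => A).map E.toEmbedding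
      have hA' : ∀ z, z ∈ A' → ∀ a, (fun b => z (a, b)) ∈ A := by
        intro z hz a
        obtain ⟨w, hw, rfl⟩ := Finset.mem_map.mp hz
        exact Fintype.mem_piFinset.mp hw a
      have hmain := aux_main p k q hpk.symm hq2 A' (by
        intro x hx hs i j
        funext ⟨a, b⟩
        have := hno (fun i b => x i (a, b)) (fun i => hA' _ (hx i) a) (by
          funext b
          have := congrFun hs (a, b)
          simpa using this) i j
        exact congrFun this b)
      have hc := aux_count (ι := Fin m × Fin n) q hq2 t h0 h1
      rw [Finset.card_map, Fintype.card_piFinset] at hmain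
      simp only [Finset.prod_const, Finset.card_univ, Fintype.card_fin] at hmain
      rw [Fintype.card_prod, Fintype.card_fin, Fintype.card_fin, mul_comm m n, pow_mul, ← hy] at hc
      have : ((A.card ^ m : ℕ) : ℝ) ≤ ((2 * (lowSet (Fin m × Fin n) q).card : ℕ) : ℝ) := by
        exact_mod_cast hmain
      push_cast at this
      linarith
    by_contra hlt
    push Not at hlt
    have hyn : 0 < y ^ n := by positivity
    have hr : 1 < (A.card : ℝ) / y ^ n := by rwa [one_lt_div hyn]
    obtain ⟨m, hm2⟩ := pow_unbounded_of_one_lt 2 hr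
    rw [div_pow, lt_div_iff₀ (by positivity)] at hm2
    exact absurd (hm m) (not_le.mpr hm2)
  have hg0 : 0 ≤ gammaConst q := by
    apply Real.sInf_nonneg
    rintro y ⟨t, h0, h1, rfl⟩
    have : t ^ q ≤ 1 := pow_le_one₀ h0.le h1.le
    have : 0 ≤ 1 - t ^ q := by linarith
    have : 0 < 1 - t := by linarith
    positivity
  have hroot : ((A.card : ℝ) ^ ((n : ℝ)⁻¹)) ^ n = A.card :=
    Real.rpow_inv_natCast_pow (by positivity) (by omega)
  have hlt : gammaConst q < (A.card : ℝ) ^ ((n : ℝ)⁻¹) := by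
    rw [← hroot] at hA
    exact lt_of_pow_lt_pow_left₀ n (by positivity) hA
  have hne : {y : ℝ | ∃ t : ℝ, 0 < t ∧ t < 1 ∧
      y = (1 - t ^ q) / (1 - t) * t ^ (-(((q : ℝ) - 1) / q))}.Nonempty :=
    ⟨_, 1 / 2, by norm_num, by norm_num, rfl⟩
  obtain ⟨y, ⟨t, h0, h1, rfl⟩, hyl⟩ := exists_lt_of_csInf_lt hne hlt
  have hb := hbound t h0 h1
  have : ((1 - t ^ q) / (1 - t) * t ^ (-(((q : ℝ) - 1) / q))) ^ n < A.card := by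
    rw [← hroot]
    refine pow_lt_pow_left₀ hyl ?_ (by omega)
    have : t ^ q ≤ 1 := pow_le_one₀ h0.le h1.le
    have : 0 ≤ 1 - t ^ q := by linarith
    have : 0 < 1 - t := by linarith
    positivity
  linarith
end
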